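/- arXiv:math/0002064 — 4 statements merged into one kernel-verified Lean document; each statement's English description precedes it below -/
import Mathlib

section
/- Let V be a commutative ring and m ⊆ V an ideal satisfying m·m = m, and suppose that the V-module m ⊗_V m is flat. Then for every integer k > 1 the ideal m is generated by the set {x^k : x ∈ m} of k-th powers of its elements. -/
/-!
The multiplication map `φ : m ⊗ m → V` has image `m` and satisfies `φ x • y = φ y • x`. By flatness
these relations are visible on coordinates: finitely many `z a` can be written `∑ i, c a i • e i`
with `φ (z a) * c b i = φ (z b) * c a i`. Expand `∏ a, φ (x a) * ∏ a, φ (y a)`, both products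
running over a group `G` of prime power order `q = p ^ s ≥ k`, as a sum over the maps from `G` to
the index set of the `e i`. The relations make its terms invariant under `G`, so modulo `p` only the
constant maps contribute, and they contribute multiples of the powers `φ (e i) ^ q`. Since
`m = m ^ (2 * q)`, this shows `m ≤ J + p m` for every prime `p`, where `J` is the ideal generated by
the `k`-th powers. Polarization gives `k! m = k! m ^ k ≤ J`, and removing the prime factors of `k!`
one at a time yields `m ≤ J`.
-/

section Combinatorics

lemma sum_mem_of_isPGroup {G α M : Type*} [Group G] [MulAction G α] [Fintype α] [AddCommMonoid M]
    {p : ℕ} [Fact p.Prime] (hG : IsPGroup p G) (K : AddSubmonoid M) {f : α → M}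
    (hf : ∀ (g : G) (a : α), f (g • a) = f a)
    (hfixed : ∀ a ∈ MulAction.fixedPoints G α, f a ∈ K) (hsmul : ∀ a, p • f a ∈ K) :
    ∑ a, f a ∈ K := by
  classical
  let orbits := MulAction.selfEquivSigmaOrbits G α
  rw [← orbits.symm.sum_comp, Fintype.sum_sigma]
  refine sum_mem fun ω _ => ?_
  have hconst (b : MulAction.orbit G ω.out) : f (orbits.symm ⟨ω, b⟩) = f ω.out := by
    obtain ⟨_, g, rfl⟩ := b
    exact hf g _
  simp only [hconst, Finset.sum_const, Finset.card_univ]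
  obtain ⟨n, hn⟩ := hG.card_orbit ω.out
  rw [Nat.card_eq_fintype_card] at hn
  cases n with
  | zero =>
    rw [hn, pow_zero, one_smul]
    exact hfixed _ (MulAction.mem_fixedPoints_iff_card_orbit_eq_one.mpr (by rw [hn, pow_zero]))
  | succ n =>
    rw [hn, pow_succ, mul_smul]
    exact nsmul_mem (hsmul _) _

lemma prod_mul_prod_comp_perm {ι κ M : Type*} [Fintype ι] [CommMonoid M] {u v : ι → M}
    {A B : ι → κ → M} (h : ∀ a b i, u a * B b i = v b * A a i) (σ : Equiv.Perm ι) (i : ι → κ) :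
    (∏ a, u a) * ∏ a, B a (i (σ a)) = (∏ a, u a) * ∏ a, B a (i a) := by
  calc (∏ a, u a) * ∏ a, B a (i (σ a))
      = ∏ a, u (σ a) * B a (i (σ a)) := by rw [Finset.prod_mul_distrib, Equiv.prod_comp σ u]
    _ = ∏ a, v a * A (σ a) (i (σ a)) := Finset.prod_congr rfl fun a _ => h _ _ _
    _ = ∏ a, v a * A a (i a) := by
      rw [Finset.prod_mul_distrib, Equiv.prod_comp σ fun a => A a (i a), Finset.prod_mul_distrib]
    _ = ∏ a, u a * B a (i a) := Finset.prod_congr rfl fun a _ => (h _ _ _).symm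
    _ = (∏ a, u a) * ∏ a, B a (i a) := Finset.prod_mul_distrib

lemma card_filter_surjective_eq_factorial (ι : Type*) [Fintype ι] [DecidableEq ι] :
    ({f : ι → ι | f.Surjective} : Finset (ι → ι)).card = (Fintype.card ι).factorial := by
  rw [← Fintype.card_perm, ← Finset.card_univ]
  refine (Finset.card_bij (fun (σ : Equiv.Perm ι) _ => ⇑σ) (fun σ _ => ?_)
    (fun _ _ _ _ h => DFunLike.coe_injective h) fun f hf => ?_).symm
  · simpa using σ.surjective
  · have hf : f.Bijective := Finite.surjective_iff_bijective.mp (by simpa using hf)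
    exact ⟨Equiv.ofBijective f hf, Finset.mem_univ _, rfl⟩

lemma factorial_mul_prod_eq_alternating_sum_pow {ι R : Type*} [Fintype ι] [DecidableEq ι]
    [CommRing R] (x : ι → R) :
    (Fintype.card ι).factorial * ∏ i, x i =
      ∑ t : Finset ι, (-1) ^ t.card * (∑ i ∈ tᶜ, x i) ^ Fintype.card ι := by
  let avoiding (i : ι) : Finset (ι → ι) := {f | ∀ j, f j ≠ i}
  have hsurj : Finset.univ.inf (fun i => (avoiding i)ᶜ) =
      ({f : ι → ι | f.Surjective} : Finset (ι → ι)) := by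
    ext f
    rw [Finset.mem_filter_univ]
    simp [avoiding, Finset.mem_inf, Function.Surjective]
  have havoiding (t : Finset ι) : t.inf avoiding = Fintype.piFinset fun _ => tᶜ := by
    ext f
    simp only [avoiding, Finset.mem_inf, Finset.mem_filter_univ, Fintype.mem_piFinset,
      Finset.mem_compl]
    exact ⟨fun h j hj => h _ hj j rfl, fun h i hi j hj => h j (hj ▸ hi)⟩
  have hprod : ∀ f ∈ ({f : ι → ι | f.Surjective} : Finset (ι → ι)),
      ∏ j, x (f j) = ∏ i, x i := fun f hf =>
    (Finite.surjective_iff_bijective.mp (Finset.mem_filter_univ f |>.mp hf)).prod_comp x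
  calc (Fintype.card ι).factorial * ∏ i, x i
      = ∑ f : ι → ι with f.Surjective, ∏ j, x (f j) := by
        rw [Finset.sum_congr rfl hprod, Finset.sum_const, card_filter_surjective_eq_factorial,
          nsmul_eq_mul]
    _ = ∑ t ∈ Finset.univ.powerset, (-1 : ℤ) ^ t.card • ∑ f ∈ t.inf avoiding, ∏ j, x (f j) := by
        rw [← Finset.inclusion_exclusion_sum_inf_compl, hsurj]
    _ = ∑ t : Finset ι, (-1) ^ t.card * (∑ i ∈ tᶜ, x i) ^ Fintype.card ι := by
        simp only [havoiding, ← Finset.prod_univ_sum, Finset.prod_const, Finset.card_univ,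
          Finset.powerset_univ, zsmul_eq_mul, Int.cast_pow, Int.cast_neg, Int.cast_one]

end Combinatorics

section Ideals

open scoped Pointwise

lemma le_of_forall_prime_le_sup_smul {R M : Type*} [CommSemiring R] [AddCommMonoid M] [Module R M]
    {A B : Submodule R M} (h : ∀ p : ℕ, p.Prime → A ≤ B ⊔ (p : R) • A) {N : ℕ} (hN : N ≠ 0)
    (hNA : ∀ x ∈ A, (N : R) • x ∈ B) : A ≤ B := by
  induction N using induction_on_primes with
  | zero => exact absurd rfl hN
  | one => exact fun x hx => by simpa using hNA x hx
  | prime_mul p a hp ih =>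
    refine ih (right_ne_zero_of_mul hN) fun x hx => ?_
    obtain ⟨b, hb, _, ⟨y, hy, rfl⟩, rfl⟩ := Submodule.mem_sup.mp (h p hp hx)
    rw [smul_add]
    refine B.add_mem (B.smul_mem _ hb) ?_
    simpa [smul_smul, mul_comm] using hNA y hy

lemma pow_card_le_of_prod_mem {R ι : Type*} [CommSemiring R] [Fintype ι] {I K : Ideal R}
    (h : ∀ x : ι → R, (∀ i, x i ∈ I) → ∏ i, x i ∈ K) : I ^ Fintype.card ι ≤ K := by
  have hspan : I ^ Fintype.card ι = Ideal.span (∏ _i : ι, (I : Set R)) := by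
    rw [← Ideal.prod_span, Ideal.span_eq, Finset.prod_const, Finset.card_univ]
  rw [hspan, Ideal.span_le]
  intro w hw
  obtain ⟨x, hx, rfl⟩ := (Set.mem_fintype_prod _ _).mp hw
  exact h x fun i => hx i

lemma factorial_mul_mem_of_pow_mem {R : Type*} [CommRing R] {I K : Ideal R}
    (hI : IsIdempotentElem I) {k : ℕ} (hk : k ≠ 0) (hpow : ∀ x ∈ I, x ^ k ∈ K) {x : R}
    (hx : x ∈ I) : (k.factorial : R) * x ∈ K := by
  have hprod (y : Fin k → R) (hy : ∀ i, y i ∈ I) : (k.factorial : R) * ∏ i, y i ∈ K := by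
    have hpolar := factorial_mul_prod_eq_alternating_sum_pow y
    rw [Fintype.card_fin] at hpolar
    rw [hpolar]
    exact K.sum_mem fun t _ => K.mul_mem_left _ (hpow _ (I.sum_mem fun i _ => hy i))
  let colon : Ideal R := K.colon {(k.factorial : R)}
  have hle : I ^ Fintype.card (Fin k) ≤ colon :=
    pow_card_le_of_prod_mem fun y hy => by
      simpa [colon, Submodule.mem_colon_singleton, mul_comm] using hprod y hy
  rw [Fintype.card_fin, hI.pow_eq hk] at hle
  simpa [colon, Submodule.mem_colon_singleton, mul_comm] using hle hx

end Ideals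

section Flat

variable {R F : Type*} [CommRing R] [AddCommGroup F] [Module R F] [Module.Flat R F]
  {φ : F →ₗ[R] R}

lemma exists_coords_of_smul_comm (hφ : ∀ x y, φ x • y = φ y • x) {ι : Type*} [Finite ι]
    (z : ι → F) :
    ∃ (n : ℕ) (e : Fin n → F) (c : ι → Fin n → R), (∀ a, z a = ∑ i, c a i • e i) ∧
      ∀ a b i, φ (z a) * c b i = φ (z b) * c a i := by
  let relations : (ι × ι →₀ R) →ₗ[R] (ι →₀ R) := Finsupp.linearCombination R fun ab =>
    Finsupp.single ab.2 (φ (z ab.1)) - Finsupp.single ab.1 (φ (z ab.2))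
  have hrel : Finsupp.linearCombination R z ∘ₗ relations = 0 := by
    ext ab
    simp [relations, hφ (z ab.1) (z ab.2)]
  obtain ⟨n, coords, lift, hlift, hcoords⟩ :=
    Module.Flat.exists_factorization_of_comp_eq_zero_of_free hrel
  refine ⟨n, fun i => lift (Finsupp.single i 1), fun a => coords (Finsupp.single a 1), fun a => ?_,
    fun a b i => ?_⟩
  · calc z a = lift (coords (Finsupp.single a 1)) := by
          simpa using LinearMap.congr_fun hlift (Finsupp.single a 1)
      _ = ∑ i, coords (Finsupp.single a 1) i • lift (Finsupp.single i 1) := by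
          conv_lhs => rw [← Finsupp.univ_sum_single (coords (Finsupp.single a 1)), map_sum]
          simp only [← map_smul, Finsupp.smul_single_one]
  · have hab := LinearMap.congr_fun hcoords (Finsupp.single (a, b) 1)
    simp only [relations, LinearMap.comp_apply, Finsupp.linearCombination_single, one_smul,
      map_sub, LinearMap.zero_apply, sub_eq_zero] at hab
    rw [← Finsupp.smul_single_one b, ← Finsupp.smul_single_one a, map_smul, map_smul] at hab
    exact DFunLike.congr_fun hab i

lemma prod_mul_prod_mem_of_isPGroup (hφ : ∀ x y, φ x • y = φ y • x) {p : ℕ} [Fact p.Prime]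
    {G : Type*} [Group G] [Fintype G] (hG : IsPGroup p G) {K : Ideal R}
    (hpow : ∀ t, φ t ^ Fintype.card G ∈ K) (hp : ∀ t, (p : R) * φ t ∈ K) (x y : G → F) :
    (∏ a, φ (x a)) * ∏ a, φ (y a) ∈ K := by
  classical
  obtain ⟨n, e, c, hc, hrel⟩ := exists_coords_of_smul_comm hφ (Sum.elim x y)
  let coeff (i : G → Fin n) : R := (∏ a, φ (x a)) * ∏ a, c (Sum.inr a) (i a)
  have hexpand : (∏ a, φ (x a)) * ∏ a, φ (y a) = ∑ i, coeff i * ∏ a, φ (e (i a)) := by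
    have hy (a : G) : φ (y a) = ∑ i, c (Sum.inr a) i * φ (e i) := by
      simpa using congrArg φ (hc (Sum.inr a))
    simp only [hy, Finset.prod_univ_sum, Finset.mul_sum, Fintype.piFinset_univ, coeff,
      Finset.prod_mul_distrib, mul_assoc]
  let _ : MulAction G (G → Fin n) := arrowAction
  rw [hexpand]
  refine sum_mem_of_isPGroup hG K.toAddSubmonoid (fun g i => ?_) (fun i hi => ?_) fun i => ?_
  · let σ : Equiv.Perm G := MulAction.toPerm g⁻¹
    exact congrArg₂ (· * ·) (prod_mul_prod_comp_perm (fun a b => hrel (Sum.inl a) (Sum.inr b)) σ i)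
      (Equiv.prod_comp σ fun a => φ (e (i a)))
  · have hconst (a : G) : i a = i 1 := by
      have ha : i (a⁻¹ • a) = i a := congrFun (hi a) a
      rw [← ha, smul_eq_mul, inv_mul_cancel]
    simp only [hconst, Finset.prod_const, Finset.card_univ]
    exact K.mul_mem_left _ (hpow _)
  · have hfactor : p • (coeff i * ∏ a, φ (e (i a))) =
        (coeff i * ∏ a ∈ Finset.univ.erase 1, φ (e (i a))) * ((p : R) * φ (e (i 1))) := by
      rw [← Finset.mul_prod_erase _ _ (Finset.mem_univ (1 : G)), nsmul_eq_mul]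
      ring
    rw [hfactor]
    exact K.mul_mem_left _ (hp _)

lemma range_le_of_pow_prime_pow_mem (hφ : ∀ x y, φ x • y = φ y • x)
    (hidem : IsIdempotentElem (LinearMap.range φ : Ideal R)) {p : ℕ} (hp : p.Prime) {n : ℕ}
    {K : Ideal R} (hpow : ∀ t, φ t ^ p ^ n ∈ K) (hpK : ∀ t, (p : R) * φ t ∈ K) :
    LinearMap.range φ ≤ K := by
  have := Fact.mk hp
  let G := Multiplicative (ZMod (p ^ n))
  have hcard : Nat.card G = p ^ n := by simp [G]
  rw [← hidem.pow_eq (n := Fintype.card (G ⊕ G)) (by simp)]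
  refine pow_card_le_of_prod_mem fun w hw => ?_
  choose t ht using hw
  simp only [← ht, Fintype.prod_sum_type]
  refine prod_mul_prod_mem_of_isPGroup hφ (IsPGroup.of_card hcard) (fun t => ?_) hpK _ _
  rw [← Nat.card_eq_fintype_card, hcard]
  exact hpow t

open scoped Pointwise in
lemma range_le_of_pow_mem (hφ : ∀ x y, φ x • y = φ y • x)
    (hidem : IsIdempotentElem (LinearMap.range φ : Ideal R)) {k : ℕ} (hk : k ≠ 0) {K : Ideal R}
    (hpow : ∀ t, φ t ^ k ∈ K) : LinearMap.range φ ≤ K := by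
  have hfactorial : ∀ x ∈ LinearMap.range φ, (k.factorial : R) * x ∈ K := fun x hx =>
    factorial_mul_mem_of_pow_mem hidem hk (by rintro _ ⟨t, rfl⟩; exact hpow t) hx
  refine le_of_forall_prime_le_sup_smul (fun p hp => ?_) k.factorial_ne_zero hfactorial
  have hle : k ≤ p ^ k := (Nat.lt_pow_self hp.one_lt).le
  refine range_le_of_pow_prime_pow_mem hφ hidem hp (n := k) (fun t => ?_) fun t => ?_
  · exact Submodule.mem_sup_left (Ideal.mem_of_dvd _ (pow_dvd_pow _ hle) (hpow t))
  · exact Submodule.mem_sup_right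
      (Submodule.smul_mem_pointwise_smul _ _ _ (LinearMap.mem_range_self φ t))

end Flat

lemma mulMap_smul_comm {R : Type*} [CommSemiring R] (I : Ideal R) (x y : TensorProduct R I I) :
    Submodule.mulMap I I x • y = Submodule.mulMap I I y • x := by
  induction x using TensorProduct.induction_on with
  | zero => simp
  | add x x' hx hx' => rw [map_add, add_smul, smul_add, hx, hx']
  | tmul a b =>
    induction y using TensorProduct.induction_on with
    | zero => simp
    | add y y' hy hy' => rw [map_add, add_smul, smul_add, hy, hy']
    | tmul c d =>
      have hac : (a : R) • c = (c : R) • a := Subtype.ext (mul_comm _ _)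
      have hbd : (b : R) • d = (d : R) • b := Subtype.ext (mul_comm _ _)
      rw [Submodule.mulMap_tmul, Submodule.mulMap_tmul, ← TensorProduct.smul_tmul_smul,
        ← TensorProduct.smul_tmul_smul, hac, hbd]

/-- Let `V` be a commutative ring and `m ⊆ V` an ideal with `m·m = m`,
and suppose the `V`-module `m ⊗_V m` is flat.  Then for every integer `k > 1` the ideal
`m` is generated by the `k`-th powers of its elements. -/
theorem span_pow_eq_self_of_flat_tensor
    {V : Type*} [CommRing V] (m : Ideal V) (hm : m * m = m)
    (hflat : Module.Flat V (TensorProduct V m m)) :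
    ∀ k : ℕ, 1 < k → Ideal.span ((fun x => x ^ k) '' (m : Set V)) = m := by
  intro k hk
  have hrange : LinearMap.range (Submodule.mulMap m m) = m :=
    (Submodule.mulMap_range m m).trans hm
  refine le_antisymm (Ideal.span_le.mpr ?_) ?_
  · rintro _ ⟨x, hx, rfl⟩
    exact m.pow_mem_of_mem hx k (by lia)
  · have hidem : IsIdempotentElem (LinearMap.range (Submodule.mulMap m m)) := by rwa [hrange]
    refine hrange.ge.trans (range_le_of_pow_mem (mulMap_smul_comm m) hidem (Nat.ne_zero_of_lt hk)
      fun t => ?_)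
    exact Ideal.subset_span ⟨_, hrange.le (LinearMap.mem_range_self _ t), rfl⟩
end

section
/- Let V be a commutative ring and m ⊆ V an ideal satisfying m·m = m, and suppose m is countably generated as a V-module. Then: (i) the V-module m̃ = m ⊗_V m is countably presented, i.e. there is an exact sequence F₁ → F₀ → m̃ → 0 of V-modules with F₀ and F₁ free of countable rank; (ii) if moreover m̃ is a flat V-module, then m̃ has projective dimension at most 1, i.e. there is a short exact sequence 0 → P₁ → P₀ → m̃ → 0 of V-modules with P₀ and P₁ projective. -/
/-!
Write `μ : I ⊗ M → M` for scalar multiplication; then `a • z = a ⊗ μ z` for `a ∈ I`. Let `p : F → M`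
be a surjection from a projective module, where `I M = M`. It lifts to a map `w : F → I ⊗ F` with
`p ∘ μ ∘ w = p`, and `e = (1 ⊗ p) ∘ w` is a surjection `F → I ⊗ M` with kernel
`range (1 - μ ∘ w) + I • ker p`, by right exactness of the tensor product. For `M = I` one may
replace `I • ker p` by the span of the Koszul relations `p x • y - p y • x`: they contain it, and
they are killed by `e` since `μ z • w = μ w • z` on `I ⊗ I`. If `F` has a countable basis, all these
relations are countably generated.

If `I ⊗ I` is moreover flat, then `ker e` is locally projective, and it is countably generated. A
surjection onto a countably generated module which splits locally splits: correct an approximate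
section on one generator after the other; at each element the sections become stationary.
-/

universe u

open Filter (atTop eventually_ge_atTop)
open LinearMap TensorProduct

section LocallyProjective

section Ring

variable {R M N : Type*} [Ring R] [AddCommGroup M] [AddCommGroup N] [Module R M] [Module R N]

theorem exists_linearMap_eventually_eq (s : ℕ → M →ₗ[R] N)
    (hs : ∀ x, ∃ y, ∀ᶠ n in atTop, s n x = y) :
    ∃ t : M →ₗ[R] N, ∀ x, ∀ᶠ n in atTop, s n x = t x := by
  choose t ht using hs
  refine ⟨{ toFun := t, map_add' := fun x y ↦ ?_, map_smul' := fun c x ↦ ?_ }, ht⟩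
  · obtain ⟨n, hx, hy, hxy⟩ := ((ht x).and ((ht y).and (ht (x + y)))).exists
    rw [← hx, ← hy, ← hxy, map_add]
  · obtain ⟨n, hx, hcx⟩ := ((ht x).and (ht (c • x))).exists
    rw [RingHom.id_apply, ← hx, ← hcx, map_smul]

theorem exists_comp_eq_id_of_locally_split (π : N →ₗ[R] M) {k : ℕ → M}
    (hk : Submodule.span R (Set.range k) = ⊤)
    (hπ : ∀ x, ∃ ψ : M →ₗ[R] N, π (ψ x) = x) :
    ∃ s : M →ₗ[R] N, π ∘ₗ s = LinearMap.id := by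
  choose ψ hψ using hπ
  let s : ℕ → M →ₗ[R] N :=
    Nat.rec 0 fun n sₙ ↦ sₙ + ψ (k n - π (sₙ (k n))) ∘ₗ (LinearMap.id - π ∘ₗ sₙ)
  have s_succ (n : ℕ) (x : M) :
      s (n + 1) x = s n x + ψ (k n - π (s n (k n))) (x - π (s n x)) := rfl
  have stationary {n : ℕ} {x : M} (hx : π (s n x) = x) {i : ℕ} (hi : n ≤ i) :
      s i x = s n x := by
    induction i, hi using Nat.le_induction with
    | base => rfl
    | succ i _ ih => rw [s_succ, ih, hx, sub_self, map_zero, add_zero]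
  have section_generator (n : ℕ) : π (s (n + 1) (k n)) = k n := by
    rw [s_succ, map_add, hψ, add_sub_cancel]
  have eventually_section (x : M) : ∀ᶠ n in atTop, π (s n x) = x := by
    have hx : x ∈ Submodule.span R (Set.range k) := hk ▸ Submodule.mem_top
    induction hx using Submodule.span_induction with
    | mem _ h =>
      obtain ⟨n, rfl⟩ := h
      filter_upwards [eventually_ge_atTop (n + 1)] with i hi
      rw [stationary (section_generator n) hi, section_generator]
    | zero => simp
    | add x y _ _ hx hy => filter_upwards [hx, hy] with n hx hy using by simp only [map_add, hx, hy]
    | smul c x _ hx => filter_upwards [hx] with n hx using by simp only [map_smul, hx]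
  obtain ⟨t, ht⟩ := exists_linearMap_eventually_eq s fun x ↦ by
    obtain ⟨n, hn⟩ := (eventually_section x).exists
    exact ⟨s n x, (eventually_ge_atTop n).mono fun _ ↦ stationary hn⟩
  refine ⟨t, LinearMap.ext fun x ↦ ?_⟩
  obtain ⟨n, hst, hx⟩ := ((ht x).and (eventually_section x)).exists
  rw [comp_apply, ← hst, hx, id_apply]

variable (R M) in
/-- A module is locally projective if each of its elements is fixed by some endomorphism that
factors through a finite free module. -/
def IsLocallyProjective : Prop :=
  ∀ x : M, ∃ (n : ℕ) (f : M →ₗ[R] (Fin n →₀ R)) (g : (Fin n →₀ R) →ₗ[R] M), g (f x) = x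

namespace IsLocallyProjective

variable (R M) in
theorem of_projective [Module.Projective R M] : IsLocallyProjective R M := by
  intro x
  obtain ⟨s, hs⟩ := Module.projective_def'.1 ‹Module.Projective R M›
  let S : Set M := (s x).support
  let coords : M →ₗ[R] (S →₀ R) := Finsupp.lsubtypeDomain S ∘ₗ s
  let combine : (S →₀ R) →ₗ[R] M := Finsupp.linearCombination R Subtype.val
  have hx : combine (coords x) = x := by
    conv_rhs => rw [← id_apply (R := R) x, ← hs]
    exact Finsupp.sum_subtypeDomain_index (h := fun m c ↦ c • m) fun _ ↦ id
  let E : (S →₀ R) ≃ₗ[R] (Fin _ →₀ R) := Finsupp.domLCongr (s x).support.equivFin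
  exact ⟨_, E.toLinearMap ∘ₗ coords, combine ∘ₗ E.symm.toLinearMap, by simp [hx]⟩

theorem projective (h : IsLocallyProjective R M) {k : ℕ → M}
    (hk : Submodule.span R (Set.range k) = ⊤) : Module.Projective R M := by
  let π : (M →₀ R) →ₗ[R] M := Finsupp.linearCombination R id
  have π_surjective : Function.Surjective π := Finsupp.linearCombination_id_surjective R M
  have locally_split (x : M) : ∃ ψ : M →ₗ[R] (M →₀ R), π (ψ x) = x := by
    obtain ⟨n, f, g, hx⟩ := h x
    obtain ⟨g', hg'⟩ := Module.projective_lifting_property π g π_surjective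
    exact ⟨g' ∘ₗ f, by rw [← comp_apply, ← comp_assoc, hg', comp_apply, hx]⟩
  obtain ⟨s, hs⟩ := exists_comp_eq_id_of_locally_split π hk locally_split
  exact Module.Projective.of_split s π hs

end IsLocallyProjective

end Ring

theorem IsLocallyProjective.ker_of_flat {R F M : Type*} [CommRing R]
    [AddCommGroup F] [Module R F] [AddCommGroup M] [Module R M] [Module.Flat R M]
    (hF : IsLocallyProjective R F) {e : F →ₗ[R] M} (he : Function.Surjective e) :
    IsLocallyProjective R (ker e) := by
  rintro ⟨x, hx⟩
  obtain ⟨n, f, g, hgf⟩ := hF x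
  have relation : (e ∘ₗ g) (f x) = 0 := by rw [comp_apply, hgf, mem_ker.1 hx]
  obtain ⟨l, a, y, hya, hax⟩ := Module.Flat.exists_factorization_of_apply_eq_zero_of_free relation
  obtain ⟨y', hy'⟩ := Module.projective_lifting_property e y he
  have corrected_mem_ker (c : Fin n →₀ R) : (g - y' ∘ₗ a) c ∈ ker e := by
    rw [mem_ker, ← comp_apply, comp_sub, ← comp_assoc, hy', hya, sub_self, LinearMap.zero_apply]
  refine ⟨n, f ∘ₗ (ker e).subtype, (g - y' ∘ₗ a).codRestrict _ corrected_mem_ker, Subtype.ext ?_⟩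
  simp [hgf, hax]

end LocallyProjective

section IdealTensor

variable {R : Type*} [CommRing R] {I : Ideal R}
variable {M N F : Type*} [AddCommGroup M] [Module R M] [AddCommGroup N] [Module R N]
  [AddCommGroup F] [Module R F]

variable (I M) in
/-- Scalar multiplication `a ⊗ x ↦ a • x` as a linear map `I ⊗ M → M`. -/
noncomputable def idealSMulMap : I ⊗[R] M →ₗ[R] M :=
  (TensorProduct.lid R M).toLinearMap ∘ₗ I.subtype.rTensor M

namespace idealSMulMap

@[simp]
theorem apply_tmul (a : I) (x : M) : idealSMulMap I M (a ⊗ₜ x) = (a : R) • x := by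
  simp [idealSMulMap]

theorem surjective (h : I • (⊤ : Submodule R M) = ⊤) : Function.Surjective (idealSMulMap I M) :=
  range_eq_top.1 ((I.subtype_rTensor_range M).trans h)

theorem apply_lTensor (f : M →ₗ[R] N) (z : I ⊗[R] M) :
    idealSMulMap I N (f.lTensor I z) = f (idealSMulMap I M z) := by
  induction z using TensorProduct.induction_on with
  | zero => simp
  | tmul a x => simp
  | add x y hx hy => simp only [map_add, hx, hy]

theorem apply_lTensor_subtype_mem (N : Submodule R M) (z : I ⊗[R] N) :
    idealSMulMap I M (N.subtype.lTensor I z) ∈ I • N := by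
  have hz : idealSMulMap I N z ∈ I • (⊤ : Submodule R N) :=
    (I.subtype_rTensor_range N).le (mem_range_self _ z)
  have := Submodule.mem_map_of_mem (f := N.subtype) hz
  rwa [Submodule.map_smul'', Submodule.map_subtype_top, ← apply_lTensor] at this

theorem coe_smul_eq_tmul (a : I) (z : I ⊗[R] M) :
    (a : R) • z = a ⊗ₜ[R] idealSMulMap I M z := by
  induction z using TensorProduct.induction_on with
  | zero => simp
  | tmul b x =>
    have hab : (a : R) • b = (b : R) • a := Subtype.ext (mul_comm (a : R) b)
    rw [apply_tmul, smul_tmul', hab, smul_tmul]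
  | add x y hx hy => rw [smul_add, map_add, tmul_add, hx, hy]

theorem smul_comm (z w : I ⊗[R] I) :
    (idealSMulMap I I z : R) • w = (idealSMulMap I I w : R) • z := by
  induction z using TensorProduct.induction_on with
  | zero => simp
  | tmul a b =>
    have hb (c : I) : (b : R) • c = (c : R) • b := Subtype.ext (mul_comm (b : R) c)
    have hab : (a : R) • b = (b : R) • a := (hb a).symm
    rw [coe_smul_eq_tmul, apply_tmul, hab, smul_tmul, hb, tmul_smul]
  | add x y hx hy => rw [map_add, Submodule.coe_add, add_smul, smul_add, hx, hy]

end idealSMulMap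

open idealSMulMap

theorem exists_comp_idealSMulMap_comp_eq [Module.Projective R F]
    (hM : I • (⊤ : Submodule R M) = ⊤) {p : F →ₗ[R] M} (hp : Function.Surjective p) :
    ∃ w : F →ₗ[R] I ⊗[R] F, p ∘ₗ idealSMulMap I F ∘ₗ w = p := by
  have surj : Function.Surjective (p ∘ₗ idealSMulMap I F) := by
    have : p ∘ₗ idealSMulMap I F = idealSMulMap I M ∘ₗ p.lTensor I :=
      LinearMap.ext fun z ↦ (apply_lTensor p z).symm
    rw [this]
    exact (idealSMulMap.surjective hM).comp (lTensor_surjective I hp)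
  exact Module.projective_lifting_property _ p surj

section Presentation

variable {p : F →ₗ[R] M} {w : F →ₗ[R] I ⊗[R] F}

theorem lTensor_comp_comp_idealSMulMap (hw : p ∘ₗ idealSMulMap I F ∘ₗ w = p) :
    (p.lTensor I ∘ₗ w) ∘ₗ idealSMulMap I F = p.lTensor I := by
  ext a x
  have hx : idealSMulMap I M (p.lTensor I (w x)) = p x :=
    (apply_lTensor p (w x)).trans (LinearMap.congr_fun hw x)
  have he : (a : R) • p.lTensor I (w x) = a ⊗ₜ p x := by rw [coe_smul_eq_tmul, hx]
  simp [he]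

theorem lTensor_comp_surjective (hp : Function.Surjective p)
    (hw : p ∘ₗ idealSMulMap I F ∘ₗ w = p) : Function.Surjective (p.lTensor I ∘ₗ w) := by
  refine Function.Surjective.of_comp (g := idealSMulMap I F) ?_
  rw [← coe_comp, lTensor_comp_comp_idealSMulMap hw]
  exact lTensor_surjective I hp

theorem ker_lTensor_comp (hp : Function.Surjective p) (hw : p ∘ₗ idealSMulMap I F ∘ₗ w = p) :
    ker (p.lTensor I ∘ₗ w) = range (LinearMap.id - idealSMulMap I F ∘ₗ w) ⊔ I • ker p := by
  have he (z : I ⊗[R] F) : p.lTensor I (w (idealSMulMap I F z)) = p.lTensor I z :=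
    LinearMap.congr_fun (lTensor_comp_comp_idealSMulMap hw) z
  apply le_antisymm
  · intro x hx
    obtain ⟨z, hz⟩ := (lTensor_exact I (exact_subtype_ker_map p) hp (w x)).1 hx
    have hmem : idealSMulMap I F (w x) ∈ I • ker p := hz ▸ apply_lTensor_subtype_mem (ker p) z
    rw [← sub_add_cancel x (idealSMulMap I F (w x))]
    exact Submodule.add_mem_sup ⟨x, rfl⟩ hmem
  · refine sup_le ?_ (Submodule.smul_le.2 fun a ha x hx ↦ ?_)
    · rintro _ ⟨x, rfl⟩
      simp [he]
    · have hx : p x = 0 := hx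
      simpa [hx] using he (⟨a, ha⟩ ⊗ₜ x)

end Presentation

/-- The Koszul differential `x ⊗ y ↦ φ x • y - φ y • x` of a linear form `φ`, defined on `F ⊗ F`
instead of its quotient `⋀² F`, as only its range matters. -/
noncomputable def koszulMap (φ : F →ₗ[R] R) : F ⊗[R] F →ₗ[R] F :=
  (TensorProduct.lid R F).toLinearMap ∘ₗ φ.rTensor F -
    (TensorProduct.rid R F).toLinearMap ∘ₗ φ.lTensor F

@[simp]
theorem koszulMap_tmul (φ : F →ₗ[R] R) (x y : F) :
    koszulMap φ (x ⊗ₜ y) = φ x • y - φ y • x := by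
  simp [koszulMap]

theorem range_smul_ker_le_range_koszulMap (φ : F →ₗ[R] R) :
    range φ • ker φ ≤ range (koszulMap φ) := by
  refine Submodule.smul_le.2 ?_
  rintro _ ⟨x, rfl⟩ y hy
  exact ⟨x ⊗ₜ y, by rw [koszulMap_tmul, mem_ker.1 hy, zero_smul, sub_zero]⟩

theorem range_koszulMap_le_ker_lTensor_comp {p : F →ₗ[R] I} {w : F →ₗ[R] I ⊗[R] F}
    (hw : p ∘ₗ idealSMulMap I F ∘ₗ w = p) :
    range (koszulMap (I.subtype ∘ₗ p)) ≤ ker (p.lTensor I ∘ₗ w) := by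
  rw [range_le_ker_iff]
  ext x y
  have hp (x : F) : p x = idealSMulMap I I (p.lTensor I (w x)) :=
    ((apply_lTensor p (w x)).trans (LinearMap.congr_fun hw x)).symm
  simp [hp, idealSMulMap.smul_comm (p.lTensor I (w x))]

theorem ker_lTensor_comp_eq_range {p : F →ₗ[R] I} {w : F →ₗ[R] I ⊗[R] F}
    (hp : Function.Surjective p) (hw : p ∘ₗ idealSMulMap I F ∘ₗ w = p) :
    ker (p.lTensor I ∘ₗ w) = range
      ((LinearMap.id - idealSMulMap I F ∘ₗ w).coprod (koszulMap (I.subtype ∘ₗ p))) := by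
  have smul_ker_le : I • ker p ≤ range (koszulMap (I.subtype ∘ₗ p)) := by
    have := range_smul_ker_le_range_koszulMap (I.subtype ∘ₗ p)
    rwa [range_comp_of_range_eq_top _ (range_eq_top.2 hp), Submodule.range_subtype,
      ker_comp_of_ker_eq_bot _ I.ker_subtype] at this
  have hker := ker_lTensor_comp hp hw
  rw [range_coprod]
  apply le_antisymm
  · exact hker.trans_le (sup_le_sup_left smul_ker_le _)
  · exact sup_le (le_sup_left.trans hker.ge) (range_koszulMap_le_ker_lTensor_comp hw)

theorem exists_presentation_tensor_self [Module.Projective R F] (hI : I * I = I) {p : F →ₗ[R] I}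
    (hp : Function.Surjective p) :
    ∃ (d : F × (F ⊗[R] F) →ₗ[R] F) (e : F →ₗ[R] I ⊗[R] I),
      Function.Surjective e ∧ ker e = range d := by
  have smul_top : I • (⊤ : Submodule R I) = ⊤ := by
    apply Submodule.map_injective_of_injective I.subtype_injective
    rw [Submodule.map_smul'', Submodule.map_subtype_top, smul_eq_mul, hI]
  obtain ⟨w, hw⟩ := exists_comp_idealSMulMap_comp_eq smul_top hp
  exact ⟨_, _, lTensor_comp_surjective hp hw, ker_lTensor_comp_eq_range hp hw⟩

end IdealTensor

section CountableBasis

variable {R : Type*} [CommRing R]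

variable (R) in
theorem nonempty_finsupp_nat_equiv_prod_tensorProduct :
    Nonempty ((ℕ →₀ R) ≃ₗ[R] (ℕ →₀ R) × ((ℕ →₀ R) ⊗[R] (ℕ →₀ R))) := by
  have b : Module.Basis ℕ R (ℕ →₀ R) := Finsupp.basisSingleOne
  exact ⟨((b.prod (b.tensorProduct b)).reindex (Denumerable.eqv _)).repr.symm⟩

theorem exists_countable_presentation_tensor_self {I : Ideal R} (hI : I * I = I) {g : ℕ → R}
    (hg : I = Ideal.span (Set.range g)) :
    ∃ (d : (ℕ →₀ R) →ₗ[R] (ℕ →₀ R)) (e : (ℕ →₀ R) →ₗ[R] I ⊗[R] I),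
      Function.Surjective e ∧ ker e = range d := by
  obtain rfl : I = range (Finsupp.linearCombination R g) := by
    rw [Finsupp.range_linearCombination, hg, Ideal.span]
  obtain ⟨d, e, he, hde⟩ :=
    exists_presentation_tensor_self hI (surjective_rangeRestrict (Finsupp.linearCombination R g))
  obtain ⟨E⟩ := nonempty_finsupp_nat_equiv_prod_tensorProduct R
  exact ⟨d ∘ₗ E, e, he, by rw [hde, range_comp_of_range_eq_top _ E.range]⟩

theorem projective_ker_of_flat {M : Type*} [AddCommGroup M] [Module R M] [Module.Flat R M]
    {F : Type*} [AddCommGroup F] [Module R F] [Module.Projective R F]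
    {d : (ℕ →₀ R) →ₗ[R] F} {e : F →ₗ[R] M} (he : Function.Surjective e) (hde : ker e = range d) :
    Module.Projective R (ker e) := by
  have locally_projective : IsLocallyProjective R (range d) :=
    hde ▸ (IsLocallyProjective.of_projective R F).ker_of_flat he
  let b : Module.Basis ℕ R (ℕ →₀ R) := Finsupp.basisSingleOne
  rw [hde]
  refine locally_projective.projective (k := d.rangeRestrict ∘ b) ?_
  rw [Set.range_comp, ← Submodule.map_span, b.span_eq, Submodule.map_top, range_rangeRestrict]

end CountableBasis

/-- Let `V` be a commutative ring and `m ⊆ V` an ideal with `m·m = m`,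
and suppose `m` is countably generated as a `V`-module.  Then:
(i) the `V`-module `m̃ = m ⊗_V m` is countably presented: there is an exact sequence
`F₁ → F₀ → m̃ → 0` with `F₀, F₁` free of countable rank;
(ii) if moreover `m̃` is flat, then `m̃` has projective dimension at most `1`: there is a
short exact sequence `0 → P₁ → P₀ → m̃ → 0` with `P₀, P₁` projective. -/
theorem tensor_countably_presented_and_projdim_le_one
    {V : Type u} [CommRing V] (m : Ideal V) (hm : m * m = m)
    (g : ℕ → V) (hgen : m = Ideal.span (Set.range g)) :
    (∃ (d : (ℕ →₀ V) →ₗ[V] (ℕ →₀ V))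
        (e : (ℕ →₀ V) →ₗ[V] TensorProduct V m m),
        Function.Surjective e ∧ LinearMap.ker e = LinearMap.range d) ∧
      (Module.Flat V (TensorProduct V m m) →
        ∃ (P₁ P₀ : Type u) (_ : AddCommGroup P₁) (_ : AddCommGroup P₀)
          (_ : Module V P₁) (_ : Module V P₀),
          Module.Projective V P₁ ∧ Module.Projective V P₀ ∧
            ∃ (ι : P₁ →ₗ[V] P₀) (π : P₀ →ₗ[V] TensorProduct V m m),
              Function.Injective ι ∧ Function.Surjective π ∧
                LinearMap.ker π = LinearMap.range ι) := by
  obtain ⟨d, e, he, hde⟩ := exists_countable_presentation_tensor_self hm hgen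
  refine ⟨⟨d, e, he, hde⟩, fun _ ↦ ?_⟩
  exact ⟨ker e, ℕ →₀ V, inferInstance, inferInstance, inferInstance, inferInstance,
    projective_ker_of_flat he hde, inferInstance, (ker e).subtype, e,
    (ker e).subtype_injective, he, (ker e).range_subtype.symm⟩
end

section
/- Let R be a commutative ring, M an R-module, and φ : R^n → R^m an R-linear map. Let C = coker(φ), and let C' = coker(φ^∨), where φ^∨ : R^m → R^n is the dual map Hom_R(φ, R) under the identification Hom_R(R^k, R) ≅ R^k. Then there is a natural isomorphism Tor_1^R(C', M) ≅ Hom_R(C, M) / Im(Hom_R(C, R) ⊗_R M → Hom_R(C, M)), where the map Hom_R(C, R) ⊗_R M → Hom_R(C, M) sends f ⊗ x to the homomorphism c ↦ f(c)·x. -/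
universe u

open CategoryTheory

/-!
Tensoring an exact sequence `0 → K → P → M → 0`, with `P` projective, with `C' = coker φ^∨` gives
`Tor₁(C', M) = ker (C' ⊗ K → C' ⊗ P)`. Let `I` be the image of `φ^∨ : G^∨ → F^∨`. By the snake lemma
for `I ⊗ - → F^∨ ⊗ -`, this kernel is `ker (I ⊗ M → F^∨ ⊗ M)`, and hence, as `G^∨ ⊗ M → I ⊗ M` is
onto, the quotient of `ker (G^∨ ⊗ M → F^∨ ⊗ M)` by the image of `ker φ^∨ ⊗ M`. Finally
`G^∨ ⊗ M = Hom(G, M)` and `F^∨ ⊗ M = Hom(F, M)`, so the kernel is `Hom(C, M)`, while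
`ker φ^∨ = Hom(C, R)`.
-/

open Function TensorProduct

section ExactSequences

variable {R : Type*} [CommRing R]

/-- In an exact sequence `0 → H → A → C` whose second map factors as `A → B → C` with `A → B` onto,
`ker (B → C)` is the quotient of `H` by the kernel of `H → A → B`, given here as the range of a
linear map `f`. -/
noncomputable def quotRangeEquivKer {H' H A B C : Type*}
    [AddCommGroup H'] [Module R H'] [AddCommGroup H] [Module R H] [AddCommGroup A] [Module R A]
    [AddCommGroup B] [Module R B] [AddCommGroup C] [Module R C]
    {f : H' →ₗ[R] H} {i : H →ₗ[R] A} {p : A →ₗ[R] B} {j : B →ₗ[R] C}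
    (hi : Injective i) (hijp : Exact i (j ∘ₗ p)) (hifp : Exact (i ∘ₗ f) p) (hp : Surjective p) :
    (H ⧸ LinearMap.range f) ≃ₗ[R] LinearMap.ker j :=
  let pi : H →ₗ[R] LinearMap.ker j := (p ∘ₗ i).codRestrict _ hijp.apply_apply_eq_zero
  have exact : Exact f pi := fun h ↦
    Subtype.ext_iff.trans <| (hifp (i h)).trans <| exists_congr fun _ ↦ hi.eq_iff
  have surjective : Surjective pi := by
    rintro ⟨b, hb⟩
    obtain ⟨a, rfl⟩ := hp b
    obtain ⟨h, rfl⟩ := (hijp a).mp hb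
    exact ⟨h, rfl⟩
  exact.linearEquivOfSurjective surjective

/-- If `ψ : X → Y` has kernel the range of `κ` and `H` is the kernel of `ψ ⊗ M`, embedded by `i`,
then the kernel of `im ψ ⊗ M → Y ⊗ M` is the quotient of `H` by the image of `κ ⊗ M`, written as
the range of its lift `f` to `H`. -/
noncomputable def quotRangeEquivKerRTensorRange {X' X Y H M : Type*}
    [AddCommGroup X'] [Module R X'] [AddCommGroup X] [Module R X] [AddCommGroup Y] [Module R Y]
    [AddCommGroup H] [Module R H] [AddCommGroup M] [Module R M]
    {κ : X' →ₗ[R] X} {ψ : X →ₗ[R] Y} {f : X' ⊗[R] M →ₗ[R] H} {i : H →ₗ[R] X ⊗[R] M}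
    (hκψ : Exact κ ψ) (hi : Injective i) (hiψ : Exact i (ψ.rTensor M))
    (hif : i ∘ₗ f = κ.rTensor M) :
    (H ⧸ LinearMap.range f) ≃ₗ[R] LinearMap.ker ((LinearMap.range ψ).subtype.rTensor M) :=
  have exact_range : Exact κ ψ.rangeRestrict := fun x ↦ Subtype.ext_iff.trans (hκψ x)
  quotRangeEquivKer hi (by rwa [← LinearMap.rTensor_comp])
    (by rw [hif]; exact rTensor_exact M exact_range ψ.surjective_rangeRestrict)
    (LinearMap.rTensor_surjective M ψ.surjective_rangeRestrict)

lemma lTensor_comp_rTensor_comm {A B K P : Type*} [AddCommMonoid A] [Module R A]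
    [AddCommMonoid B] [Module R B] [AddCommMonoid K] [Module R K] [AddCommMonoid P] [Module R P]
    (κ : K →ₗ[R] P) (f : A →ₗ[R] B) :
    κ.lTensor B ∘ₗ f.rTensor K = f.rTensor P ∘ₗ κ.lTensor A := by
  rw [LinearMap.lTensor_comp_rTensor, LinearMap.rTensor_comp_lTensor]

/-- For exact sequences `0 → I → Y → Q → 0` and `0 → K → P → M → 0` with `Y` and `P` flat, the
snake lemma identifies `ker (I ⊗ M → Y ⊗ M)` with `ker (Q ⊗ K → Q ⊗ P)`: both compute
`Tor₁(Q, M)`. -/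
noncomputable def kerRTensorEquivKerLTensor {I Y Q K P M : Type*}
    [AddCommGroup I] [Module R I] [AddCommGroup Y] [Module R Y] [AddCommGroup Q] [Module R Q]
    [AddCommGroup K] [Module R K] [AddCommGroup P] [Module R P] [AddCommGroup M] [Module R M]
    [Module.Flat R Y] [Module.Flat R P]
    {ι : I →ₗ[R] Y} {q : Y →ₗ[R] Q} {κ : K →ₗ[R] P} {ε : P →ₗ[R] M}
    (hι : Injective ι) (hιq : Exact ι q) (hq : Surjective q)
    (hκ : Injective κ) (hκε : Exact κ ε) (hε : Surjective ε) :
    LinearMap.ker (ι.rTensor M) ≃ₗ[R] LinearMap.ker (κ.lTensor Q) :=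
  have top_exact := lTensor_exact I hκε hε
  have bot_exact := lTensor_exact Y hκε hε
  have comm_left : κ.lTensor Y ∘ₗ ι.rTensor K = ι.rTensor P ∘ₗ κ.lTensor I :=
    lTensor_comp_rTensor_comm _ _
  have comm_right : ε.lTensor Y ∘ₗ ι.rTensor P = ι.rTensor M ∘ₗ ε.lTensor I :=
    lTensor_comp_rTensor_comm _ _
  have ker_exact := LinearMap.exact_subtype_ker_map (ι.rTensor M)
  have coker_exact := rTensor_exact K hιq hq
  have top_surjective := LinearMap.lTensor_surjective I hε
  have bot_injective := Module.Flat.lTensor_preserves_injective_linearMap (M := Y) κ hκ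
  let δ := SnakeLemma.δ' (ι.rTensor K) (ι.rTensor P) (ι.rTensor M) (κ.lTensor I) (ε.lTensor I)
    top_exact (κ.lTensor Y) (ε.lTensor Y) bot_exact comm_left comm_right
    (LinearMap.ker (ι.rTensor M)).subtype ker_exact (q.rTensor K) coker_exact
    top_surjective bot_injective
  have middle_exact : Exact (0 : PUnit →ₗ[R] I ⊗[R] P) (ι.rTensor P) :=
    (LinearMap.exact_zero_iff_injective _ _).mpr
      (Module.Flat.rTensor_preserves_injective_linearMap ι hι)
  have δ_injective : Injective δ :=
    (LinearMap.exact_zero_iff_injective PUnit δ).mp <|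
      SnakeLemma.exact_δ'_right _ _ _ _ _ top_exact _ _ bot_exact comm_left comm_right
        0 middle_exact _ ker_exact _ coker_exact top_surjective bot_injective 0 (by simp)
        (Submodule.subtype_injective _)
  have δ_exact : Exact δ (κ.lTensor Q) :=
    SnakeLemma.exact_δ'_left _ _ _ _ _ top_exact _ _ bot_exact comm_left comm_right
      _ ker_exact _ coker_exact (q.rTensor P) (rTensor_exact P hιq hq) top_surjective
      bot_injective _ (lTensor_comp_rTensor_comm κ q)
      (LinearMap.rTensor_surjective K hq)
  LinearEquiv.ofInjective δ δ_injective ≪≫ₗ LinearEquiv.ofEq _ _ δ_exact.linearMap_ker_eq.symm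

end ExactSequences

section Duality

variable {R : Type*} [CommRing R] {F G C M : Type*} [AddCommGroup F] [Module R F]
  [AddCommGroup G] [Module R G] [Module.Finite R G] [Module.Projective R G]
  [AddCommGroup C] [Module R C] [AddCommGroup M] [Module R M]

variable (M) in
/-- The map `Hom(C, M) → Hom(G, M) = G^∨ ⊗ M` given by precomposition with `π : G → C`. -/
noncomputable def homToDualTensor (π : G →ₗ[R] C) :
    (C →ₗ[R] M) →ₗ[R] Module.Dual R G ⊗[R] M :=
  (dualTensorHomEquiv R G M).symm ∘ₗ π.lcomp R M

lemma homToDualTensor_comp_dualTensorHom (π : G →ₗ[R] C) :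
    homToDualTensor M π ∘ₗ dualTensorHom R C M = π.dualMap.rTensor M := by
  rw [homToDualTensor, LinearMap.comp_assoc, ← dualTensorHom_comp_rTensor_dualMap]
  exact LinearMap.ext fun _ ↦ (dualTensorHomEquiv R G M).symm_apply_apply _

lemma homToDualTensor_injective {π : G →ₗ[R] C} (hπ : Surjective π) :
    Injective (homToDualTensor M π) :=
  (dualTensorHomEquiv R G M).symm.injective.comp (LinearMap.lcomp_injective_of_surjective _ hπ)

lemma exact_homToDualTensor_rTensor_dualMap [Module.Finite R F] [Module.Projective R F]
    {φ : F →ₗ[R] G} {π : G →ₗ[R] C} (hφπ : Exact φ π) (hπ : Surjective π) :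
    Exact (homToDualTensor M π) (φ.dualMap.rTensor M) := by
  intro t
  have comm : dualTensorHom R F M (φ.dualMap.rTensor M t) = φ.lcomp R M (dualTensorHom R G M t) :=
    LinearMap.congr_fun (dualTensorHom_comp_rTensor_dualMap φ) t
  rw [← map_eq_zero_iff _ (dualTensorHom_bijective (R := R) (M := F) (N := M)).injective, comm,
    LinearMap.exact_lcomp_of_exact_of_surjective M hφπ hπ]
  exact exists_congr fun _ ↦ (dualTensorHomEquiv R G M).symm_apply_eq.symm

/-- For an exact sequence `F → G → C → 0` given by `φ` and `π`, with `F` and `G` finite projective,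
the cokernel of `Hom(C, R) ⊗ M → Hom(C, M)` is the kernel of `im φ^∨ ⊗ M → F^∨ ⊗ M`. -/
noncomputable def homQuotRangeEquivKerRTensor [Module.Finite R F] [Module.Projective R F]
    {φ : F →ₗ[R] G} {π : G →ₗ[R] C} (hφπ : Exact φ π) (hπ : Surjective π) :
    ((C →ₗ[R] M) ⧸ LinearMap.range (dualTensorHom R C M)) ≃ₗ[R]
      LinearMap.ker ((LinearMap.range φ.dualMap).subtype.rTensor M) :=
  quotRangeEquivKerRTensorRange (LinearMap.exact_lcomp_of_exact_of_surjective R hφπ hπ)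
    (homToDualTensor_injective hπ) (exact_homToDualTensor_rTensor_dualMap hφπ hπ)
    (homToDualTensor_comp_dualTensorHom π)

/-- The dot product identifies the cokernel of the transposed matrix of `φ` with the cokernel of
the dual map of `φ`. -/
noncomputable def cokerTransposeEquivCokerDualMap {m n : Type*} [Fintype m] [DecidableEq m]
    [Fintype n] [DecidableEq n] (φ : (n → R) →ₗ[R] (m → R)) :
    ((n → R) ⧸ LinearMap.range (Matrix.toLin' (LinearMap.toMatrix' φ).transpose)) ≃ₗ[R]
      Module.Dual R (n → R) ⧸ LinearMap.range φ.dualMap :=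
  Submodule.Quotient.equiv _ _ (dotProductEquiv R n) <| by
    have comm : dotProductEquiv R n ∘ₗ Matrix.toLin' (LinearMap.toMatrix' φ).transpose =
        φ.dualMap ∘ₗ dotProductEquiv R m := by
      ext
      simp
    rw [← LinearMap.range_comp, comm, LinearMap.range_comp]
    simp

end Duality

section Tor

variable {R : Type u} [CommRing R]

/-- `Tor₁(Q, M)` is the kernel of `Q ⊗ K → Q ⊗ P₀`, where `K` is the kernel of the augmentation
`P₀ → M` of a projective resolution. -/
noncomputable def torOneEquivKerLTensor (Q : ModuleCat.{u} R) {M : ModuleCat.{u} R}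
    (P : ProjectiveResolution M) :
    ((Tor (ModuleCat.{u} R) 1).obj Q).obj M ≃ₗ[R]
      LinearMap.ker ((LinearMap.ker (P.π.f 0).hom).subtype.lTensor Q) :=
  let T := (MonoidalCategory.tensoringLeft (ModuleCat.{u} R)).obj Q
  let T_P := (T.mapHomologicalComplex (ComplexShape.down ℕ)).obj P.complex
  let S := T_P.sc' 2 1 0
  let homologyIso : ((Tor (ModuleCat.{u} R) 1).obj Q).obj M ≅ S.moduleCatLeftHomologyData.H :=
    P.isoLeftDerivedObj T 1 ≪≫
      ShortComplex.homologyMapIso (T_P.isoSc' 2 1 0 (by simp) (by simp)) ≪≫ S.moduleCatHomologyIso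
  let ε := (P.π.f 0).hom
  have d₂_exact : Exact (P.complex.d 2 1).hom (P.complex.d 1 0).hom :=
    (ShortComplex.ShortExact.moduleCat_exact_iff_function_exact _).mp (P.exact_succ 0)
  have d₁_exact : Exact (P.complex.d 1 0).hom ε :=
    (ShortComplex.ShortExact.moduleCat_exact_iff_function_exact _).mp P.exact₀
  let d₁ : P.complex.X 1 →ₗ[R] LinearMap.ker ε :=
    (P.complex.d 1 0).hom.codRestrict _ d₁_exact.apply_apply_eq_zero
  have d₁_surjective : Surjective d₁ := by
    rintro ⟨x, hx⟩
    obtain ⟨y, rfl⟩ := (d₁_exact x).mp hx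
    exact ⟨y, rfl⟩
  have syzygy_exact : Exact (P.complex.d 2 1).hom d₁ := fun x ↦
    Subtype.ext_iff.trans (d₂_exact x)
  have cycles_exact : Exact (LinearMap.ker S.g.hom).subtype
      ((LinearMap.ker ε).subtype.lTensor Q ∘ₗ d₁.lTensor Q) := by
    rw [← LinearMap.lTensor_comp]
    exact LinearMap.exact_subtype_ker_map S.g.hom
  homologyIso.toLinearEquiv ≪≫ₗ
    quotRangeEquivKer (f := S.moduleCatToCycles) (Submodule.subtype_injective _) cycles_exact
      (lTensor_exact Q syzygy_exact d₁_surjective) (LinearMap.lTensor_surjective Q d₁_surjective)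

/-- For a submodule `N` of a flat module `Y`, `Tor₁(Y ⧸ N, M)` is the kernel of
`N ⊗ M → Y ⊗ M`. -/
noncomputable def torOneQuotientEquivKerRTensor {Y : Type u} [AddCommGroup Y] [Module R Y]
    [Module.Flat R Y] (N : Submodule R Y) (M : Type u) [AddCommGroup M] [Module R M] :
    ((Tor (ModuleCat.{u} R) 1).obj (ModuleCat.of R (Y ⧸ N))).obj (ModuleCat.of R M) ≃ₗ[R]
      LinearMap.ker (N.subtype.rTensor M) :=
  let P := projectiveResolution (ModuleCat.of R M)
  let ε := (P.π.f 0).hom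
  have ε_surjective : Surjective ε := (ModuleCat.epi_iff_surjective _).mp inferInstance
  have : Module.Projective R (P.complex.X 0) := (P.complex.X 0).projective_of_module_projective
  torOneEquivKerLTensor _ P ≪≫ₗ
    (kerRTensorEquivKerLTensor N.subtype_injective (LinearMap.exact_subtype_mkQ N)
      N.mkQ_surjective (Submodule.subtype_injective _) ε.exact_subtype_ker_map ε_surjective).symm

end Tor

theorem tor_coker_dual_iso_general {R : Type u} [CommRing R] (M : Type u) [AddCommGroup M]
    [Module R M] {F G : Type u} [AddCommGroup F] [Module R F] [Module.Finite R F]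
    [Module.Projective R F] [AddCommGroup G] [Module R G] [Module.Finite R G]
    [Module.Projective R G] (φ : F →ₗ[R] G) :
    Nonempty
      ((((Tor (ModuleCat.{u} R) 1).obj
          (ModuleCat.of R (Module.Dual R F ⧸ LinearMap.range φ.dualMap))).obj
        (ModuleCat.of R M)) ≃ₗ[R]
      ((G ⧸ LinearMap.range φ) →ₗ[R] M) ⧸
        LinearMap.range (dualTensorHom R (G ⧸ LinearMap.range φ) M)) :=
  ⟨torOneQuotientEquivKerRTensor (LinearMap.range φ.dualMap) M ≪≫ₗ
    (homQuotRangeEquivKerRTensor (LinearMap.exact_map_mkQ_range φ)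
      (Submodule.mkQ_surjective _)).symm⟩

/-- Let `R` be a commutative ring, `M` an `R`-module and
`φ : R^n → R^m` an `R`-linear map.  Let `C = coker φ` and `C' = coker φ^∨`, where
`φ^∨ : R^m → R^n` is the dual (transpose) map.  Then
`Tor_1^R(C', M) ≅ Hom_R(C, M) / Im(Hom_R(C, R) ⊗_R M → Hom_R(C, M))`,
where `f ⊗ x` is sent to the homomorphism `c ↦ f(c)·x`. -/
theorem tor_coker_dual_iso
    (R : Type u) [CommRing R] (M : Type u) [AddCommGroup M] [Module R M]
    (n m : ℕ) (φ : (Fin n → R) →ₗ[R] (Fin m → R)) :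
    Nonempty
      ((((Tor (ModuleCat.{u} R) 1).obj
          (ModuleCat.of R
            ((Fin n → R) ⧸
              LinearMap.range (Matrix.toLin' (LinearMap.toMatrix' φ).transpose)))).obj
        (ModuleCat.of R M)) ≃ₗ[R]
      (((Fin m → R) ⧸ LinearMap.range φ) →ₗ[R] M) ⧸
        LinearMap.range
          (TensorProduct.lift
            (LinearMap.smulRightₗ :
              ((((Fin m → R) ⧸ LinearMap.range φ) →ₗ[R] R)) →ₗ[R]
                M →ₗ[R] (((Fin m → R) ⧸ LinearMap.range φ) →ₗ[R] M)))) := by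
  obtain ⟨e⟩ := tor_coker_dual_iso_general M φ
  exact ⟨(((Tor (ModuleCat.{u} R) 1).mapIso
    (cokerTransposeEquivCokerDualMap φ).toModuleIso).app _).toLinearEquiv ≪≫ₗ e⟩
end

section
/- Let V be a commutative ring, m ⊆ V an ideal satisfying m·m = m, and R a commutative V-algebra. Let (M_n, φ_n : M_n → M_{n+1})_{n∈ℕ} be a direct system of R-modules, and let (ε_n)_{n∈ℕ}, (δ_n)_{n∈ℕ} be sequences of ideals of V such that: (a) (ε_n) converges to V and ∏_{j≥0} δ_j is a Cauchy product; (b) ε_n·Ext^i_R(M_n, N) = 0 and δ_n·Ext^i_R(coker(φ_n), N) = 0 for every R-module N, every integer i > 0 and every n; (c) δ_n·ker(φ_n) = 0 for every n. Then the colimit colim_{n∈ℕ} M_n is an almost projective R-module, i.e. m·Ext^i_R(colim_n M_n, N) = 0 for every R-module N and every i > 0. -/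
/-!
An element `r` kills all `Ext¹(M, N)` if and only if `r • id` on `M` factors through a projective
module, and then `r` kills all higher `Ext` groups as well. The hypotheses thus become statements
about maps; in particular, if `a` kills the kernel of `φ` and `b • id` on the cokernel of `φ`
factors through a projective module, then `φ` has a retraction up to the factor `a * b`.

Given `b, c ∈ m`, idempotence of `m` provides finitely generated ideals `I k ≤ m` with `c ∈ I 0` and
`I k ≤ I (k + 1) ^ 2`. Let `F` be the free module on `colim M` and `K` the kernel of `F → colim M`.
Along a sufficiently sparse subsequence `t`, the maps `b • (M (t k) → colim M)` lift to `F`, and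
the cokernel of `Hom(M (t (k + 1)), K) → Hom(M (t k), K)` is killed by `I (k + 1)`. A Mittag-Leffler
argument then makes `c` times these lifts compatible, so that they define a map `colim M → F`
lifting `b * c`.
-/

universe u v

open CategoryTheory

/-- Almost projective `R`-module: `m·Ext^i_R(M, N) = 0` for all `N` and all `i > 0`. -/
def IsAlmostProjective (V : Type v) [CommRing V] (m : Ideal V)
    (R : Type u) [CommRing R] [Algebra V R]
    (M : Type u) [AddCommGroup M] [Module R M] : Prop :=
  ∀ i : ℕ, 0 < i → ∀ N : ModuleCat.{u} R, ∀ a ∈ m,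
    ∀ x : ((Ext R (ModuleCat.{u} R) i).obj (Opposite.op (ModuleCat.of R M))).obj N,
      algebraMap V R a • x = 0

/-- A sequence of ideals of `V` converges to `V` if every finitely generated subideal
of `m` is eventually contained in all members of the sequence. -/
def IdealSeqTendstoTop {V : Type v} [CommRing V] (m : Ideal V)
    (ε : ℕ → Ideal V) : Prop :=
  ∀ m₀ : Ideal V, m₀.FG → m₀ ≤ m → ∃ n₀ : ℕ, ∀ n ≥ n₀, m₀ ≤ ε n

/-- The formal infinite product `∏_{j≥0} δ_j` of ideals of `V` is a Cauchy product if
for every finitely generated ideal `m₀ ⊆ m` there is `n₀` such that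
`m₀ ⊆ δ_n·δ_{n+1}·⋯·δ_{n+p}` for all `n ≥ n₀` and all `p ≥ 0`. -/
def IdealSeqCauchyProduct {V : Type v} [CommRing V] (m : Ideal V)
    (δ : ℕ → Ideal V) : Prop :=
  ∀ m₀ : Ideal V, m₀.FG → m₀ ≤ m →
    ∃ n₀ : ℕ, ∀ n ≥ n₀, ∀ p : ℕ, m₀ ≤ ∏ j ∈ Finset.range (p + 1), δ (n + j)

section Ext

open Limits

theorem mem_annihilator_homology_iff {R : Type*} [CommRing R] (S : ShortComplex (ModuleCat R))
    (r : R) :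
    r ∈ Module.annihilator R S.homology ↔
      ∀ z, S.g.hom z = 0 → ∃ w, S.f.hom w = r • z := by
  rw [S.moduleCatHomologyIso.toLinearEquiv.annihilator_eq]
  change r ∈ Module.annihilator R (_ ⧸ LinearMap.range S.moduleCatToCycles) ↔ _
  rw [Submodule.annihilator_quotient, Submodule.mem_colon]
  simp only [Set.mem_univ, LinearMap.mem_range, Subtype.ext_iff, SetLike.val_smul, forall_const,
    Subtype.forall, LinearMap.mem_ker]
  rfl

variable {R : Type*} [CommRing R] {C : Type*} [Category* C] [Abelian C] [Linear R C]
  [EnoughProjectives C] {X : C}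

theorem mem_annihilator_ext_succ_iff (P : ProjectiveResolution X) (Y : C) (n : ℕ) (r : R) :
    r ∈ Module.annihilator R (((Ext R C (n + 1)).obj (Opposite.op X)).obj Y) ↔
      ∀ g : P.complex.X (n + 1) ⟶ Y, P.complex.d (n + 2) (n + 1) ≫ g = 0 →
        ∃ h : P.complex.X n ⟶ Y, P.complex.d (n + 1) n ≫ h = r • g := by
  let K := P.complex.linearYonedaObj R Y
  let e := P.isoExt (R := R) (n + 1) Y ≪≫
    ShortComplex.homologyMapIso (K.isoSc' n (n + 1) (n + 2) (by simp) (by simp))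
  rw [e.toLinearEquiv.annihilator_eq, mem_annihilator_homology_iff]
  rfl

theorem exists_comp_eq_smul_id_of_mem_annihilator_ext_one {r : R}
    (hr : ∀ N : C, r ∈ Module.annihilator R (((Ext R C 1).obj (Opposite.op X)).obj N)) :
    ∃ (Q : C) (_ : Projective Q) (α : X ⟶ Q) (β : Q ⟶ X), α ≫ β = r • 𝟙 X := by
  let P := projectiveResolution X
  let p : P.complex.X 0 ⟶ X := P.π.f 0
  have : Epi p := inferInstanceAs (Epi (P.π.f 0))
  let q : P.complex.X 1 ⟶ kernel p := kernel.lift p (P.complex.d 1 0) P.complex_d_comp_π_f_zero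
  have hq : q ≫ kernel.ι p = P.complex.d 1 0 := kernel.lift_ι _ _ _
  have hdq : P.complex.d 2 1 ≫ q = 0 := by simp [← cancel_mono (kernel.ι p), hq]
  obtain ⟨t, ht⟩ := (mem_annihilator_ext_succ_iff P _ 0 r).1 (hr (kernel p)) q hdq
  replace ht : P.complex.d 1 0 ≫ t = r • q := ht
  have hd : P.complex.d 1 0 ≫ (r • 𝟙 _ - t ≫ kernel.ι p) = 0 := by
    rw [Preadditive.comp_sub, reassoc_of% ht, Linear.smul_comp, hq]
    simp
  obtain ⟨s, hs⟩ : ∃ s : X ⟶ P.complex.X 0, p ≫ s = r • 𝟙 _ - t ≫ kernel.ι p :=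
    ⟨P.exact₀.desc _ hd, P.exact₀.g_desc _ hd⟩
  refine ⟨P.complex.X 0, P.projective 0, s, p, ?_⟩
  rw [← cancel_epi p, reassoc_of% hs]
  simp [Preadditive.sub_comp]

theorem mem_annihilator_ext_succ_of_comp_eq_smul_id {r : R} {Q : C} [Projective Q] {α : X ⟶ Q}
    {β : Q ⟶ X} (h : α ≫ β = r • 𝟙 X) (Y : C) (n : ℕ) :
    r ∈ Module.annihilator R (((Ext R C (n + 1)).obj (Opposite.op X)).obj Y) := by
  let P := projectiveResolution X
  let S := ProjectiveResolution.self Q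
  -- `r` is homotopic to `φ`, which vanishes in positive degrees because it factors through a
  -- resolution concentrated in degree `0`.
  let φ : P.complex ⟶ P.complex :=
    ProjectiveResolution.lift α P S ≫ ProjectiveResolution.lift β S P
  have hS : IsZero (S.complex.X (n + 1)) :=
    HomologicalComplex.isZero_single_obj_X (ComplexShape.down ℕ) 0 Q (n + 1) (by simp)
  have hφ : φ.f (n + 1) = 0 := by
    simp [φ, hS.eq_of_tgt ((ProjectiveResolution.lift α P S).f (n + 1)) 0]
  have hπ : r • P.π.f 0 = P.π.f 0 ≫ (r • 𝟙 X) :=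
    ((Linear.comp_smul _ _ _ (P.π.f 0) r (𝟙 X)).trans
      (congrArg (r • ·) (Category.comp_id (P.π.f 0)))).symm
  let H : Homotopy (r • 𝟙 P.complex) φ := ProjectiveResolution.liftHomotopy (r • 𝟙 X) _ _
    (by ext; simpa using hπ) (by ext; simp [φ, h])
  have hH := H.comm (n + 1)
  rw [hφ, Homotopy.dNext_succ_chainComplex, Homotopy.prevD_chainComplex, add_zero] at hH
  rw [mem_annihilator_ext_succ_iff P]
  intro g hg
  refine ⟨H.hom n (n + 1) ≫ g, ?_⟩
  simpa [hg, Preadditive.add_comp] using congr($hH.symm ≫ g)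

end Ext

section ProjectivityIdeal

variable (R : Type*) [CommRing R] (M : Type*) [AddCommGroup M] [Module R M]

/-- The ideal of all `r : R` such that multiplication by `r` on `M` lifts along the canonical
surjection `(M →₀ R) → M`, equivalently factors through some projective module. -/
noncomputable def projectivityIdeal : Ideal R :=
  (LinearMap.range (LinearMap.compRight R (Finsupp.linearCombination R (id : M → M)))).comap
    (Algebra.linearMap R (Module.End R M))

variable {R M} {r : R}

theorem mem_projectivityIdeal_iff :
    r ∈ projectivityIdeal R M ↔
      ∃ s : M →ₗ[R] M →₀ R, Finsupp.linearCombination R id ∘ₗ s = r • LinearMap.id :=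
  Iff.rfl

variable {A B P : Type*} [AddCommGroup A] [Module R A] [AddCommGroup B] [Module R B]
  [AddCommGroup P] [Module R P]

theorem exists_comp_eq_smul_of_mem_projectivityIdeal (hr : r ∈ projectivityIdeal R M)
    {p : A →ₗ[R] B} (hp : Function.Surjective p) (g : M →ₗ[R] B) :
    ∃ s : M →ₗ[R] A, p ∘ₗ s = r • g := by
  obtain ⟨s, hs⟩ := mem_projectivityIdeal_iff.1 hr
  obtain ⟨q, hq⟩ := Module.projective_lifting_property p (g ∘ₗ Finsupp.linearCombination R id) hp
  exact ⟨q ∘ₗ s, by rw [← LinearMap.comp_assoc, hq, LinearMap.comp_assoc, hs, LinearMap.comp_smul,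
    LinearMap.comp_id]⟩

theorem mem_projectivityIdeal_of_comp_eq_smul_id [Module.Projective R P] {s : M →ₗ[R] P}
    {p : P →ₗ[R] M} (h : p ∘ₗ s = r • LinearMap.id) : r ∈ projectivityIdeal R M := by
  obtain ⟨q, hq⟩ := Module.projective_lifting_property (Finsupp.linearCombination R id) p
    (Finsupp.linearCombination_id_surjective R M)
  exact mem_projectivityIdeal_iff.2 ⟨q ∘ₗ s, by rw [← LinearMap.comp_assoc, hq, h]⟩

end ProjectivityIdeal

theorem mem_projectivityIdeal_of_mem_annihilator_ext_one {R : Type u} [CommRing R]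
    {M : Type u} [AddCommGroup M] [Module R M] {r : R}
    (hr : ∀ N : ModuleCat.{u} R, r ∈ Module.annihilator R
      (((Ext R (ModuleCat.{u} R) 1).obj (Opposite.op (ModuleCat.of R M))).obj N)) :
    r ∈ projectivityIdeal R M := by
  obtain ⟨Q, hQ, α, β, h⟩ := exists_comp_eq_smul_id_of_mem_annihilator_ext_one hr
  have : Module.Projective R Q := (IsProjective.iff_projective Q).2 hQ
  exact mem_projectivityIdeal_of_comp_eq_smul_id congr(ModuleCat.Hom.hom $h)

theorem mem_annihilator_ext_succ_of_mem_projectivityIdeal {R : Type u} [CommRing R]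
    {M : Type u} [AddCommGroup M] [Module R M] {r : R} (hr : r ∈ projectivityIdeal R M)
    (N : ModuleCat.{u} R) (n : ℕ) :
    r ∈ Module.annihilator R
      (((Ext R (ModuleCat.{u} R) (n + 1)).obj (Opposite.op (ModuleCat.of R M))).obj N) := by
  obtain ⟨s, hs⟩ := mem_projectivityIdeal_iff.1 hr
  have : Projective (ModuleCat.of R (M →₀ R)) := (IsProjective.iff_projective _).1 inferInstance
  exact mem_annihilator_ext_succ_of_comp_eq_smul_id (α := ModuleCat.ofHom s)
    (β := ModuleCat.ofHom (Finsupp.linearCombination R id)) (ModuleCat.hom_ext hs) N n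

theorem isAlmostProjective_iff_map_le_projectivityIdeal {V : Type v} [CommRing V] {m : Ideal V}
    {R : Type u} [CommRing R] [Algebra V R] {M : Type u} [AddCommGroup M] [Module R M] :
    IsAlmostProjective V m R M ↔ m.map (algebraMap V R) ≤ projectivityIdeal R M := by
  rw [Ideal.map_le_iff_le_comap]
  constructor
  · intro h a ha
    exact mem_projectivityIdeal_of_mem_annihilator_ext_one fun N =>
      Module.mem_annihilator.2 (h 1 one_pos N a ha)
  · intro h i hi N a ha
    obtain ⟨n, rfl⟩ := Nat.exists_eq_add_one.2 hi
    exact Module.mem_annihilator.1 (mem_annihilator_ext_succ_of_mem_projectivityIdeal (h ha) N n)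

section RetractionIdeal

variable {R : Type*} [CommRing R] {A B C K : Type*} [AddCommGroup A] [Module R A]
  [AddCommGroup B] [Module R B] [AddCommGroup C] [Module R C] [AddCommGroup K] [Module R K]

/-- The ideal of all `r : R` such that `φ` admits a retraction up to `r`, that is, a linear map
`ρ : B → A` with `ρ ∘ φ = r • id`. -/
noncomputable def retractionIdeal (φ : A →ₗ[R] B) : Ideal R :=
  (LinearMap.range (LinearMap.lcomp R A φ)).comap (Algebra.linearMap R (Module.End R A))

theorem mem_retractionIdeal_iff {φ : A →ₗ[R] B} {r : R} :
    r ∈ retractionIdeal φ ↔ ∃ ρ : B →ₗ[R] A, ρ ∘ₗ φ = r • LinearMap.id :=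
  Iff.rfl

@[simp]
theorem retractionIdeal_id : retractionIdeal (LinearMap.id : A →ₗ[R] A) = ⊤ :=
  (Ideal.eq_top_iff_one _).2 (mem_retractionIdeal_iff.2 ⟨LinearMap.id, by simp⟩)

theorem retractionIdeal_mul_le_comp (φ : A →ₗ[R] B) (ψ : B →ₗ[R] C) :
    retractionIdeal φ * retractionIdeal ψ ≤ retractionIdeal (ψ ∘ₗ φ) := by
  rw [Ideal.mul_le]
  intro r hr s hs
  obtain ⟨ρ, hρ⟩ := mem_retractionIdeal_iff.1 hr
  obtain ⟨σ, hσ⟩ := mem_retractionIdeal_iff.1 hs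
  refine mem_retractionIdeal_iff.2 ⟨ρ ∘ₗ σ, ?_⟩
  calc (ρ ∘ₗ σ) ∘ₗ ψ ∘ₗ φ = ρ ∘ₗ (σ ∘ₗ ψ) ∘ₗ φ := by simp only [LinearMap.comp_assoc]
    _ = (r * s) • LinearMap.id := by
      rw [hσ, LinearMap.smul_comp, LinearMap.id_comp, LinearMap.comp_smul, hρ, smul_smul, mul_comm]

theorem annihilator_ker_le_retractionIdeal {φ : A →ₗ[R] B} (hφ : Function.Surjective φ) :
    Module.annihilator R (LinearMap.ker φ) ≤ retractionIdeal φ := by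
  intro r hr
  have hker : LinearMap.ker φ ≤ LinearMap.ker (r • LinearMap.id : A →ₗ[R] A) := fun x hx =>
    congrArg Subtype.val (Module.mem_annihilator.1 hr ⟨x, hx⟩)
  refine mem_retractionIdeal_iff.2
    ⟨(LinearMap.ker φ).liftQ _ hker ∘ₗ (φ.quotKerEquivOfSurjective hφ).symm, ?_⟩
  ext x
  simp

theorem projectivityIdeal_quotient_le_retractionIdeal (N : Submodule R A) :
    projectivityIdeal R (A ⧸ N) ≤ retractionIdeal N.subtype := by
  intro r hr
  obtain ⟨s, hs⟩ :=
    exists_comp_eq_smul_of_mem_projectivityIdeal hr N.mkQ_surjective LinearMap.id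
  have hmem (x : A) : (r • LinearMap.id - s ∘ₗ N.mkQ : A →ₗ[R] A) x ∈ N := by
    have hsx : N.mkQ (s (N.mkQ x)) = r • N.mkQ x := LinearMap.congr_fun hs (N.mkQ x)
    rw [← Submodule.Quotient.mk_eq_zero, ← Submodule.mkQ_apply, LinearMap.sub_apply, map_sub,
      LinearMap.comp_apply, hsx]
    simp
  refine mem_retractionIdeal_iff.2 ⟨LinearMap.codRestrict N _ hmem, ?_⟩
  ext x
  simp [(Submodule.Quotient.mk_eq_zero N).2 x.2]

theorem annihilator_ker_mul_projectivityIdeal_le_retractionIdeal (φ : A →ₗ[R] B) :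
    Module.annihilator R (LinearMap.ker φ) * projectivityIdeal R (B ⧸ LinearMap.range φ) ≤
      retractionIdeal φ :=
  calc
    _ ≤ retractionIdeal φ.rangeRestrict * retractionIdeal (LinearMap.range φ).subtype :=
      Ideal.mul_mono
        (φ.ker_rangeRestrict ▸ annihilator_ker_le_retractionIdeal φ.surjective_rangeRestrict)
        (projectivityIdeal_quotient_le_retractionIdeal _)
    _ ≤ retractionIdeal φ := retractionIdeal_mul_le_comp _ _

theorem retractionIdeal_smul_top_le_range_lcomp (φ : A →ₗ[R] B) :
    retractionIdeal φ • (⊤ : Submodule R (A →ₗ[R] K)) ≤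
      LinearMap.range (LinearMap.lcomp R K φ) := by
  rw [Submodule.smul_le]
  intro r hr u _
  obtain ⟨ρ, hρ⟩ := mem_retractionIdeal_iff.1 hr
  exact ⟨u ∘ₗ ρ, by
    rw [LinearMap.lcomp_apply', LinearMap.comp_assoc, hρ, LinearMap.comp_smul, LinearMap.comp_id]⟩

end RetractionIdeal

section IdealSequence

variable {V : Type*} [CommRing V]

theorem exists_fg_le_mul_self_of_mem_mul {m : Ideal V} {x : V} (hx : x ∈ m * m) :
    ∃ J : Ideal V, J.FG ∧ J ≤ m ∧ x ∈ J * J := by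
  obtain ⟨S, T, hS, hT, hxST⟩ := Submodule.mem_span_mul_finite_of_mem_mul hx
  refine ⟨Ideal.span (S ∪ T : Set V), Submodule.fg_span (S.finite_toSet.union T.finite_toSet),
    Ideal.span_le.2 (Set.union_subset hS hT), ?_⟩
  rw [← Submodule.span_mul_span] at hxST
  exact Ideal.mul_mono (Ideal.span_mono Set.subset_union_left)
    (Ideal.span_mono Set.subset_union_right) hxST

theorem exists_fg_le_mul_self {I m : Ideal V} (hI : I.FG) (hIm : I ≤ m * m) :
    ∃ J : Ideal V, J.FG ∧ J ≤ m ∧ I ≤ J * J := by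
  induction I, hI using Submodule.fg_induction with
  | singleton x =>
    obtain ⟨J, hJ, hJm, hxJ⟩ :=
      exists_fg_le_mul_self_of_mem_mul (hIm (Submodule.mem_span_singleton_self x))
    exact ⟨J, hJ, hJm, (Submodule.span_singleton_le_iff_mem x _).2 hxJ⟩
  | sup A B _ _ ihA ihB =>
    obtain ⟨J, hJ, hJm, hAJ⟩ := ihA (le_sup_left.trans hIm)
    obtain ⟨K, hK, hKm, hBK⟩ := ihB (le_sup_right.trans hIm)
    exact ⟨J ⊔ K, Submodule.FG.sup hJ hK, sup_le hJm hKm,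
      sup_le (hAJ.trans (Ideal.mul_mono le_sup_left le_sup_left))
        (hBK.trans (Ideal.mul_mono le_sup_right le_sup_right))⟩

theorem exists_seq_fg_le_mul_self {m : Ideal V} (hm : m * m = m) {c : V} (hc : c ∈ m) :
    ∃ I : ℕ → Ideal V, (∀ k, (I k).FG) ∧ (∀ k, I k ≤ m) ∧
      (∀ k, I k ≤ I (k + 1) * I (k + 1)) ∧ c ∈ I 0 := by
  have hstep (I : {I : Ideal V // I.FG ∧ I ≤ m}) :
      ∃ J : {I : Ideal V // I.FG ∧ I ≤ m}, I.1 ≤ J.1 * J.1 := by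
    obtain ⟨J, hJ, hJm, hIJ⟩ := exists_fg_le_mul_self I.2.1 (I.2.2.trans hm.ge)
    exact ⟨⟨J, hJ, hJm⟩, hIJ⟩
  choose next hnext using hstep
  let I₀ : {I : Ideal V // I.FG ∧ I ≤ m} :=
    ⟨Ideal.span {c}, Submodule.fg_span_singleton c, (Ideal.span_singleton_le_iff_mem m).2 hc⟩
  refine ⟨fun k => (next^[k] I₀).1, fun k => (next^[k] I₀).2.1, fun k => (next^[k] I₀).2.2,
    fun k => ?_, Ideal.mem_span_singleton_self c⟩
  simpa only [Function.iterate_succ_apply'] using hnext (next^[k] I₀)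

end IdealSequence

section MittagLeffler

variable {R : Type*} [CommRing R] {B : ℕ → Type*} [∀ k, AddCommGroup (B k)] [∀ k, Module R (B k)]

theorem exists_sub_eq_smul_of_smul_top_le_range {g : ∀ k, B (k + 1) →ₗ[R] B k} {I : ℕ → Ideal R}
    (hI : ∀ k, I k ≤ I (k + 1) * I (k + 1))
    (hg : ∀ k, I (k + 1) • (⊤ : Submodule R (B k)) ≤ LinearMap.range (g k)) {c : R}
    (hc : c ∈ I 0) (y : ∀ k, B k) : ∃ x : ∀ k, B k, ∀ k, x k - g k (x (k + 1)) = c • y k := by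
  have hcI (k : ℕ) : c ∈ I k := by
    induction k with
    | zero => exact hc
    | succ k ih => exact Ideal.mul_le_left (hI k ih)
  -- One factor of `I (k + 1) * I (k + 1)` pays for lifting along `g k`, the other keeps the lift
  -- inside `I (k + 1) • ⊤`, so that the lifting can be iterated.
  have hmap (k : ℕ) :
      I k • (⊤ : Submodule R (B k)) ≤ (I (k + 1) • (⊤ : Submodule R (B (k + 1)))).map (g k) :=
    calc
      _ ≤ (I (k + 1) * I (k + 1)) • ⊤ := Submodule.smul_mono_left (hI k)
      _ = I (k + 1) • I (k + 1) • ⊤ := Submodule.mul_smul _ _ _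
      _ ≤ I (k + 1) • LinearMap.range (g k) := Submodule.smul_mono le_rfl (hg k)
      _ = (I (k + 1) • (⊤ : Submodule R _)).map (g k) := by
        rw [Submodule.map_smul'', Submodule.map_top]
  have hstep (k : ℕ) (x : (I k • ⊤ : Submodule R (B k))) :
      ∃ x' : (I (k + 1) • ⊤ : Submodule R (B (k + 1))), (x : B k) - g k x' = c • y k := by
    obtain ⟨x', hx', h⟩ :=
      hmap k (sub_mem x.2 (Submodule.smul_mem_smul (hcI k) (Submodule.mem_top (x := y k))))
    exact ⟨⟨x', hx'⟩, by rw [h, sub_sub_cancel]⟩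
  choose next hnext using hstep
  let x (k : ℕ) : (I k • ⊤ : Submodule R (B k)) := Nat.rec 0 next k
  exact ⟨fun k => (x k).1, fun k => hnext k (x k)⟩

variable {M : ℕ → Type*} [∀ k, AddCommGroup (M k)] [∀ k, Module R (M k)]
  {L P : Type*} [AddCommGroup L] [Module R L] [AddCommGroup P] [Module R P]

theorem exists_compatible_lifts {φ : ∀ k, M k →ₗ[R] M (k + 1)} {ι : ∀ k, M k →ₗ[R] L}
    (hι : ∀ k, ι (k + 1) ∘ₗ φ k = ι k) {p : P →ₗ[R] L} (hp : Function.Surjective p)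
    {I : ℕ → Ideal R} (hI : ∀ k, I k ≤ I (k + 1) * I (k + 1))
    (hφ : ∀ k, I (k + 1) ≤ retractionIdeal (φ k)) {b c : R}
    (hb : ∀ k, b ∈ projectivityIdeal R (M k)) (hc : c ∈ I 0) :
    ∃ σ : ∀ k, M k →ₗ[R] P, (∀ k, σ (k + 1) ∘ₗ φ k = σ k) ∧ ∀ k, p ∘ₗ σ k = (b * c) • ι k := by
  choose s hs using fun k => exists_comp_eq_smul_of_mem_projectivityIdeal (hb k) hp (ι k)
  have hdefect (k : ℕ) : p ∘ₗ (s k - s (k + 1) ∘ₗ φ k) = 0 := by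
    rw [LinearMap.comp_sub, ← LinearMap.comp_assoc, hs, hs, LinearMap.smul_comp, hι, sub_self]
  let y (k : ℕ) : M k →ₗ[R] LinearMap.ker p :=
    LinearMap.codRestrict _ (s k - s (k + 1) ∘ₗ φ k) (LinearMap.congr_fun (hdefect k))
  obtain ⟨x, hx⟩ := exists_sub_eq_smul_of_smul_top_le_range
    (g := fun k => LinearMap.lcomp R (LinearMap.ker p) (φ k)) hI
    (fun k => (Submodule.smul_mono_left (hφ k)).trans
      (retractionIdeal_smul_top_le_range_lcomp (φ k))) hc y
  have hx_sub (k : ℕ) : (LinearMap.ker p).subtype ∘ₗ x k -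
      ((LinearMap.ker p).subtype ∘ₗ x (k + 1)) ∘ₗ φ k = c • (s k - s (k + 1) ∘ₗ φ k) :=
    congr((LinearMap.ker p).subtype ∘ₗ $(hx k))
  have hpx (k : ℕ) : p ∘ₗ (LinearMap.ker p).subtype ∘ₗ x k = 0 :=
    LinearMap.ext fun z => (x k z).2
  refine ⟨fun k => c • s k - (LinearMap.ker p).subtype ∘ₗ x k, fun k => ?_, fun k => ?_⟩
  · rw [LinearMap.sub_comp, LinearMap.smul_comp, ← sub_eq_zero, sub_sub_sub_comm, ← smul_sub,
      ← neg_sub (s k), smul_neg, ← hx_sub]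
    abel
  · rw [LinearMap.comp_sub, LinearMap.comp_smul, hs, hpx, sub_zero, smul_smul, mul_comm]

end MittagLeffler

section DirectedSystem

variable {R : Type*} [CommRing R] {ι : Type*} [Preorder ι] {M : ι → Type*}
  [∀ i, AddCommGroup (M i)] [∀ i, Module R (M i)] (f : ∀ i j : ι, i ≤ j → M i →ₗ[R] M j)

theorem directLimit_of_comp [DecidableEq ι] {i j : ι} (h : i ≤ j) :
    Module.DirectLimit.of R ι M f j ∘ₗ f i j h = Module.DirectLimit.of R ι M f i :=
  LinearMap.ext fun _ => Module.DirectLimit.of_f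

variable [DirectedSystem M fun i j h => f i j h]

theorem directedSystem_self (i : ι) : f i i le_rfl = LinearMap.id :=
  LinearMap.ext (DirectedSystem.map_self (f := fun i j h => f i j h) (i := i))

theorem directedSystem_comp {i j k : ι} (hij : i ≤ j) (hjk : j ≤ k) :
    f j k hjk ∘ₗ f i j hij = f i k (hij.trans hjk) :=
  LinearMap.ext (DirectedSystem.map_map (f := fun i j h => f i j h) hij hjk)

end DirectedSystem

section DirectLimit

variable {R : Type*} [CommRing R] {M : ℕ → Type*} [∀ n, AddCommGroup (M n)] [∀ n, Module R (M n)]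
  (f : ∀ i j : ℕ, i ≤ j → M i →ₗ[R] M j) [DirectedSystem M fun i j h => f i j h]

theorem prod_retractionIdeal_le (n p : ℕ) :
    ∏ j ∈ Finset.range p, retractionIdeal (f (n + j) (n + j + 1) (Nat.le_succ _)) ≤
      retractionIdeal (f n (n + p) (Nat.le_add_right n p)) := by
  induction p with
  | zero =>
    have hid : f n (n + 0) (Nat.le_add_right n 0) = LinearMap.id := directedSystem_self f n
    rw [hid, retractionIdeal_id]
    exact le_top
  | succ p ih =>
    have hcomp : f (n + p) (n + p + 1) (Nat.le_succ _) ∘ₗ f n (n + p) (Nat.le_add_right n p) =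
        f n (n + (p + 1)) (Nat.le_add_right n (p + 1)) := directedSystem_comp f _ _
    rw [Finset.prod_range_succ, ← hcomp]
    exact (Ideal.mul_mono_left ih).trans (retractionIdeal_mul_le_comp _ _)

theorem exists_directLimit_hom_of_strictMono {P : Type*} [AddCommGroup P] [Module R P]
    {t : ℕ → ℕ} (ht : StrictMono t) {σ : ∀ k, M (t k) →ₗ[R] P}
    (hσ : ∀ k, σ (k + 1) ∘ₗ f (t k) (t (k + 1)) (ht.monotone (Nat.le_succ k)) = σ k) :
    ∃ g : Module.DirectLimit M f →ₗ[R] P, ∀ k, g ∘ₗ Module.DirectLimit.of R ℕ M f (t k) = σ k := by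
  have hσ_le {k l : ℕ} (h : k ≤ l) : σ l ∘ₗ f (t k) (t l) (ht.monotone h) = σ k := by
    induction l, h using Nat.le_induction with
    | base => rw [directedSystem_self f, LinearMap.comp_id]
    | succ l h ih =>
      rw [← directedSystem_comp f (ht.monotone h) (ht.monotone (Nat.le_succ l)),
        ← LinearMap.comp_assoc, hσ, ih]
  let τ (i : ℕ) : M i →ₗ[R] P := σ i ∘ₗ f i (t i) ht.le_apply
  have hτ {i j : ℕ} (h : i ≤ j) : τ j ∘ₗ f i j h = τ i := by
    simp only [τ]
    rw [← hσ_le h, LinearMap.comp_assoc, LinearMap.comp_assoc, directedSystem_comp,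
      directedSystem_comp]
  refine ⟨Module.DirectLimit.lift R ℕ M f τ fun i j h => LinearMap.congr_fun (hτ h), fun k => ?_⟩
  ext z
  rw [LinearMap.comp_apply, Module.DirectLimit.lift_of, ← LinearMap.congr_fun (hσ_le ht.le_apply) z]

variable {V : Type*} [CommRing V] [Algebra V R] {δ : ℕ → Ideal V}

theorem map_mul_self_le_retractionIdeal
    (hφ : ∀ n, (δ n * δ n).map (algebraMap V R) ≤
      retractionIdeal (f n (n + 1) (Nat.le_succ n)))
    {J : Ideal V} {n l : ℕ} (hnl : n < l) (hJ : ∀ p, J ≤ ∏ j ∈ Finset.range (p + 1), δ (n + j)) :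
    (J * J).map (algebraMap V R) ≤ retractionIdeal (f n l hnl.le) := by
  obtain ⟨p, rfl⟩ := Nat.exists_eq_add_of_lt hnl
  calc
    (J * J).map (algebraMap V R)
        ≤ (∏ j ∈ Finset.range (p + 1), δ (n + j) * δ (n + j)).map (algebraMap V R) := by
      rw [Finset.prod_mul_distrib]
      exact Ideal.map_mono (Ideal.mul_mono (hJ p) (hJ p))
    _ = ∏ j ∈ Finset.range (p + 1), (δ (n + j) * δ (n + j)).map (algebraMap V R) :=
      map_prod (Ideal.mapHom (algebraMap V R)) _ _
    _ ≤ ∏ j ∈ Finset.range (p + 1), retractionIdeal (f (n + j) (n + j + 1) (Nat.le_succ _)) :=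
      Finset.prod_le_prod' fun j _ => hφ (n + j)
    _ ≤ retractionIdeal (f n (n + p + 1) hnl.le) := prod_retractionIdeal_le f n (p + 1)

theorem IdealSeqCauchyProduct.exists_strictMono {m : Ideal V} {ε : ℕ → Ideal V}
    (hδ : IdealSeqCauchyProduct m δ) (hε : IdealSeqTendstoTop m ε) {b : V} (hb : b ∈ m)
    {I : ℕ → Ideal V} (hI : ∀ k, (I k).FG) (hIm : ∀ k, I k ≤ m) :
    ∃ t : ℕ → ℕ, StrictMono t ∧ (∀ k, b ∈ ε (t k)) ∧
      ∀ k p, I k ≤ ∏ j ∈ Finset.range (p + 1), δ (t k + j) := by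
  obtain ⟨N, hN⟩ := hε (Ideal.span {b}) (Submodule.fg_span_singleton b)
    ((Ideal.span_singleton_le_iff_mem m).2 hb)
  have hP (k : ℕ) : ∃ n₀, ∀ n ≥ n₀, b ∈ ε n ∧
      ∀ p, I k ≤ ∏ j ∈ Finset.range (p + 1), δ (n + j) := by
    obtain ⟨n₀, hn₀⟩ := hδ (I k) (hI k) (hIm k)
    exact ⟨max N n₀, fun n hn =>
      ⟨hN n (le_of_max_le_left hn) (Ideal.mem_span_singleton_self b),
        hn₀ n (le_of_max_le_right hn)⟩⟩
  obtain ⟨t, ht, htP⟩ := Filter.extraction_forall_of_eventually' hP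
  exact ⟨t, ht, fun k => (htP k).1, fun k => (htP k).2⟩

theorem map_le_projectivityIdeal_directLimit {m : Ideal V} (hm : m * m = m) {ε : ℕ → Ideal V}
    (hε : IdealSeqTendstoTop m ε) (hδ : IdealSeqCauchyProduct m δ)
    (hM : ∀ n, (ε n).map (algebraMap V R) ≤ projectivityIdeal R (M n))
    (hφ : ∀ n, (δ n * δ n).map (algebraMap V R) ≤
      retractionIdeal (f n (n + 1) (Nat.le_succ n))) :
    m.map (algebraMap V R) ≤ projectivityIdeal R (Module.DirectLimit M f) := by
  suffices h : m * m ≤ (projectivityIdeal R (Module.DirectLimit M f)).comap (algebraMap V R) from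
    Ideal.map_le_iff_le_comap.2 (hm.ge.trans h)
  rw [Ideal.mul_le]
  intro b hb c hc
  obtain ⟨I, hI, hIm, hI_le, hcI⟩ := exists_seq_fg_le_mul_self hm hc
  obtain ⟨t, ht, hbt, hIt⟩ := hδ.exists_strictMono hε hb (fun k => hI (k + 2)) fun k => hIm (k + 2)
  have hretr (k : ℕ) : (I (k + 1)).map (algebraMap V R) ≤
      retractionIdeal (f (t k) (t (k + 1)) (ht (Nat.lt_succ_self k)).le) :=
    (Ideal.map_mono (hI_le (k + 1))).trans
      (map_mul_self_le_retractionIdeal f hφ (ht (Nat.lt_succ_self k)) (hIt k))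
  obtain ⟨σ, hσ, hpσ⟩ := exists_compatible_lifts
    (ι := fun k => Module.DirectLimit.of R ℕ M f (t k))
    (fun k => directLimit_of_comp f (ht (Nat.lt_succ_self k)).le)
    (Finsupp.linearCombination_id_surjective R (Module.DirectLimit M f))
    (I := fun k => (I k).map (algebraMap V R))
    (fun k => (Ideal.map_mono (hI_le k)).trans_eq (Ideal.map_mul _ _ _)) hretr
    (fun k => hM (t k) (Ideal.mem_map_of_mem _ (hbt k))) (Ideal.mem_map_of_mem _ hcI)
  obtain ⟨g, hg⟩ := exists_directLimit_hom_of_strictMono f ht hσ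
  rw [Ideal.mem_comap, map_mul]
  refine mem_projectivityIdeal_iff.2 ⟨g, Module.DirectLimit.hom_ext fun i => ?_⟩
  rw [← directLimit_of_comp f (ht.le_apply (x := i)), ← LinearMap.comp_assoc,
    LinearMap.comp_assoc _ g, hg, hpσ]
  rfl

end DirectLimit

/-- Let `(M_n, φ_n)` be a direct system of `R`-modules, and let
`(ε_n)`, `(δ_n)` be sequences of ideals of `V` such that `(ε_n)` converges to `V` and
`∏ δ_j` is a Cauchy product, `ε_n·Ext^i_R(M_n, N) = 0` and
`δ_n·Ext^i_R(coker φ_n, N) = 0` for all `R`-modules `N`, all `i > 0` and all `n`, and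
`δ_n·ker φ_n = 0` for all `n`.  Then `colim_n M_n` is an almost projective `R`-module,
i.e. `m·Ext^i_R(colim M_n, N) = 0` for all `N` and all `i > 0`. -/
theorem directLimit_isAlmostProjective
    (V : Type v) [CommRing V] (m : Ideal V) (hm : m * m = m)
    (R : Type u) [CommRing R] [Algebra V R]
    (M : ℕ → Type u) [∀ n, AddCommGroup (M n)] [∀ n, Module R (M n)]
    (f : ∀ i j : ℕ, i ≤ j → M i →ₗ[R] M j)
    [DirectedSystem M fun i j h => f i j h]
    (ε δ : ℕ → Ideal V)
    (hε : IdealSeqTendstoTop m ε) (hδ : IdealSeqCauchyProduct m δ)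
    (hExtM : ∀ n : ℕ, ∀ i : ℕ, 0 < i → ∀ N : ModuleCat.{u} R, ∀ a ∈ ε n,
      ∀ x : ((Ext R (ModuleCat.{u} R) i).obj
          (Opposite.op (ModuleCat.of R (M n)))).obj N,
        algebraMap V R a • x = 0)
    (hExtCoker : ∀ n : ℕ, ∀ i : ℕ, 0 < i → ∀ N : ModuleCat.{u} R, ∀ a ∈ δ n,
      ∀ x : ((Ext R (ModuleCat.{u} R) i).obj
          (Opposite.op (ModuleCat.of R
            (M (n + 1) ⧸ LinearMap.range (f n (n + 1) (Nat.le_succ n)))))).obj N,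
        algebraMap V R a • x = 0)
    (hker : ∀ n : ℕ, ∀ a ∈ δ n, ∀ x ∈ LinearMap.ker (f n (n + 1) (Nat.le_succ n)),
      algebraMap V R a • x = 0) :
    IsAlmostProjective V m R (Module.DirectLimit M f) := by
  have hM (n : ℕ) : (ε n).map (algebraMap V R) ≤ projectivityIdeal R (M n) :=
    isAlmostProjective_iff_map_le_projectivityIdeal.1 (hExtM n)
  have hcoker (n : ℕ) : (δ n).map (algebraMap V R) ≤
      projectivityIdeal R (M (n + 1) ⧸ LinearMap.range (f n (n + 1) (Nat.le_succ n))) :=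
    isAlmostProjective_iff_map_le_projectivityIdeal.1 (hExtCoker n)
  have hann (n : ℕ) : (δ n).map (algebraMap V R) ≤
      Module.annihilator R (LinearMap.ker (f n (n + 1) (Nat.le_succ n))) :=
    Ideal.map_le_iff_le_comap.2 fun a ha =>
      Module.mem_annihilator.2 fun x => Subtype.ext (hker n a ha x x.2)
  have hφ (n : ℕ) : (δ n * δ n).map (algebraMap V R) ≤
      retractionIdeal (f n (n + 1) (Nat.le_succ n)) := by
    rw [Ideal.map_mul]
    exact (Ideal.mul_mono (hann n) (hcoker n)).trans
      (annihilator_ker_mul_projectivityIdeal_le_retractionIdeal _)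
  exact isAlmostProjective_iff_map_le_projectivityIdeal.2
    (map_le_projectivityIdeal_directLimit f hm hε hδ hM hφ)
end
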